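/- arXiv:2311.18786 — 2 statements merged into one kernel-verified Lean document; each statement's English description precedes it below -/
import Mathlib

section
/- For each integer t ≥ 1, there exists a connected graph H with minimum degree δ(H) = t and a constant c > 0 such that M_H(n) ≥ c·n² for all sufficiently large n. -/
/-!
The graph `H` is `K_t ∨ (K_14 ∪ K_12 ∪ K_1)`: the isolated vertex has degree `t`, all other vertices
have larger degree, and the `t` hubs make it connected.

The starting graph is `K_t ∨ (K_14 ∪ L)` for a graph `L` without `K_13`. A copy of `H` minus an edge
in such a graph must send the clique `K_{t+14}` and its `t` hubs to themselves (`gad_rigid`), so the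
`H`-process acts on `L` as the process of `K_12` with an isolated vertex (`bootStep_gad`).

The graph `L` (`ladder`) encodes a torus `ℤ/p × ℤ/q`, where `p = 4 a` and `q = 4 (a + 1)`. Over each
element of `ℤ/p` and of `ℤ/q` there is a block of three vertices, and blocks of the same side are
joined when equal or consecutive. The blocks over `x` and `y` are joined if `x - y` is `0` or `± 1`
modulo `4`, except that when `x ≡ y` one edge is left out. A `K_12` minus an edge has to consist of
two consecutive blocks over `a, a + 1` and two over `b, b + 1` with `a ≡ b` modulo `4`, so its only
initially absent edges are those at `(a, b)` and `(a + 1, b + 1)`, and one of them is infected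
exactly when the other one is present (`ladder_missing`, `bootStep_ladder`). Starting with the edge
at `(0, 0)`, the infection runs along the diagonal of the torus, one step at a time in both
directions. This diagonal is a closed curve of length `lcm p q = 4 a (a + 1)`, which is quadratic in
the number of vertices (`cells_not`).
-/

open SimpleGraph

/-- The number of subgraphs of `G` isomorphic to `H`. -/
noncomputable def numCopies {α β : Type*} (H : SimpleGraph α) (G : SimpleGraph β) : ℕ :=
  {G' : G.Subgraph | Nonempty (G'.coe ≃g H)}.ncard

/-- One step of the `H`-bootstrap process: add every missing edge whose addition
creates a new copy of `H`. -/
noncomputable def bootStep {α β : Type*} (H : SimpleGraph α) (G : SimpleGraph β) :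
    SimpleGraph β :=
  G ⊔ SimpleGraph.fromRel (fun u v =>
    numCopies H G < numCopies H (G ⊔ SimpleGraph.fromEdgeSet {s(u, v)}))

/-- The `H`-bootstrap process `(G_i)_{i ≥ 0}` on the starting graph `G`. -/
noncomputable def bootProcess {α β : Type*} (H : SimpleGraph α) (G : SimpleGraph β) :
    ℕ → SimpleGraph β
  | 0 => G
  | i + 1 => bootStep H (bootProcess H G i)

/-- The running time `τ_H(G)` of the `H`-bootstrap process on `G`. -/
noncomputable def runningTime {α β : Type*} (H : SimpleGraph α) (G : SimpleGraph β) : ℕ :=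
  sInf {t | bootProcess H G t = bootProcess H G (t + 1)}

/-- `M_H(n)`, the maximum running time of the `H`-bootstrap process over all
`n`-vertex starting graphs. -/
noncomputable def maxRunningTime {α : Type*} (H : SimpleGraph α) (n : ℕ) : ℕ :=
  sSup {t | ∃ G : SimpleGraph (Fin n), runningTime H G = t}

/-! ### The bootstrap step in terms of injective maps -/

/-- Adding `uv` creates a new copy of `H` exactly when `uv` is a non-edge and some injective map
sends all edges of `H` but one to edges of `G`, and the remaining one to `uv`. -/
theorem numCopies_lt_iff {α β : Type*} [Finite β] (H : SimpleGraph α) (G : SimpleGraph β)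
    {u v : β} (huv : u ≠ v) :
    numCopies H G < numCopies H (G ⊔ SimpleGraph.fromEdgeSet {s(u, v)}) ↔
      ¬ G.Adj u v ∧ ∃ f : α → β, Function.Injective f ∧ ∃ a b, H.Adj a b ∧ f a = u ∧ f b = v ∧
        ∀ c d, H.Adj c d → s(c, d) ≠ s(a, b) → G.Adj (f c) (f d) := by
  have hle : G ≤ G ⊔ SimpleGraph.fromEdgeSet {s(u, v)} := le_sup_left
  let m : G.Subgraph → (G ⊔ SimpleGraph.fromEdgeSet {s(u, v)}).Subgraph := fun K =>
    { verts := K.verts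
      Adj := K.Adj
      adj_sub := fun h => hle (K.adj_sub h)
      edge_vert := K.edge_vert
      symm := K.symm }
  have hm : Function.Injective m := by
    intro K L h
    have h1 := congrArg Subgraph.verts h
    have h2 := congrArg Subgraph.Adj h
    exact Subgraph.ext h1 h2
  constructor
  · intro hlt
    have hnadj : ¬ G.Adj u v := by
      intro hadj
      have : G ⊔ SimpleGraph.fromEdgeSet {s(u, v)} = G := by
        rw [sup_eq_left]
        intro x y hxy
        simp only [fromEdgeSet_adj, Set.mem_singleton_iff, Sym2.eq_iff] at hxy
        rcases hxy.1 with ⟨rfl, rfl⟩ | ⟨rfl, rfl⟩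
        · exact hadj
        · exact hadj.symm
      rw [this] at hlt
      exact lt_irrefl _ hlt
    refine ⟨hnadj, ?_⟩
    by_contra hno
    refine absurd hlt (not_lt.2 ?_)
    unfold numCopies
    rw [← Set.ncard_image_of_injective _ hm]
    refine Set.ncard_le_ncard ?_ (Set.toFinite _)
    rintro K ⟨φ⟩
    by_cases hK : K.Adj u v
    · exfalso
      apply hno
      refine ⟨fun x => (φ.symm x : β), fun x y h => φ.symm.injective (Subtype.ext h),
        φ ⟨u, K.edge_vert hK⟩, φ ⟨v, K.edge_vert hK.symm⟩, ?_, by simp, by simp, ?_⟩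
      · rw [φ.map_adj_iff]
        exact hK
      · intro c d hcd hne
        have h1 : K.Adj (φ.symm c) (φ.symm d) := φ.symm.map_adj_iff.2 hcd
        rcases K.adj_sub h1 with h | h
        · exact h
        · exfalso
          simp only [fromEdgeSet_adj, Set.mem_singleton_iff, Sym2.eq_iff] at h
          apply hne
          rw [Sym2.eq_iff]
          rcases h.1 with ⟨h1, h2⟩ | ⟨h1, h2⟩
          · left
            constructor
            · apply φ.symm.injective; apply Subtype.ext; simpa using h1
            · apply φ.symm.injective; apply Subtype.ext; simpa using h2
          · right
            constructor
            · apply φ.symm.injective; apply Subtype.ext; simpa using h1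
            · apply φ.symm.injective; apply Subtype.ext; simpa using h2
    · refine ⟨⟨K.verts, K.Adj, ?_, K.edge_vert, K.symm⟩, ⟨φ⟩, rfl⟩
      intro x y hxy
      rcases K.adj_sub hxy with h | h
      · exact h
      · exfalso
        simp only [fromEdgeSet_adj, Set.mem_singleton_iff, Sym2.eq_iff] at h
        rcases h.1 with ⟨rfl, rfl⟩ | ⟨rfl, rfl⟩
        · exact hK hxy
        · exact hK hxy.symm
  · rintro ⟨hnadj, f, hf, a, b, hab, rfl, rfl, hf'⟩
    unfold numCopies
    rw [← Set.ncard_image_of_injective _ hm]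
    refine Set.ncard_lt_ncard ?_ (Set.toFinite _)
    rw [Set.ssubset_iff_of_subset]
    · have hhom : ∀ {c d}, H.Adj c d →
          (G ⊔ SimpleGraph.fromEdgeSet {s(f a, f b)}).Adj (f c) (f d) := by
        intro c d hcd
        by_cases h : s(c, d) = s(a, b)
        · right
          refine ⟨?_, fun h => hcd.ne (hf h)⟩
          have := congrArg (Sym2.map f) h
          simpa using this
        · left
          exact hf' c d hcd h
      let φ : Copy H (G ⊔ SimpleGraph.fromEdgeSet {s(f a, f b)}) := ⟨⟨f, hhom⟩, hf⟩
      refine ⟨φ.toSubgraph, ⟨φ.isoToSubgraph.symm⟩, ?_⟩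
      rintro ⟨K, -, hK⟩
      apply hnadj
      apply K.adj_sub
      have h2 : φ.toSubgraph.Adj (f a) (f b) := by
        rw [Copy.toSubgraph, Subgraph.map_adj]
        exact ⟨a, b, hab, rfl, rfl⟩
      rw [← hK] at h2
      exact h2
    · rintro _ ⟨K, ⟨φ⟩, rfl⟩
      exact ⟨φ⟩

theorem bootStep_adj {α β : Type*} [Finite β] (H : SimpleGraph α) (G : SimpleGraph β) (u v : β) :
    (bootStep H G).Adj u v ↔ G.Adj u v ∨ (u ≠ v ∧ ¬ G.Adj u v ∧
      ∃ f : α → β, Function.Injective f ∧ ∃ a b, H.Adj a b ∧ f a = u ∧ f b = v ∧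
        ∀ c d, H.Adj c d → s(c, d) ≠ s(a, b) → G.Adj (f c) (f d)) := by
  unfold bootStep
  rw [sup_adj, fromRel_adj, Sym2.eq_swap (a := v) (b := u)]
  constructor
  · rintro (h | ⟨h, h'⟩)
    · exact Or.inl h
    · rw [or_self, numCopies_lt_iff H G h] at h'
      exact Or.inr ⟨h, h'⟩
  · rintro (h | ⟨h, h'⟩)
    · exact Or.inl h
    · exact Or.inr ⟨h, Or.inl ((numCopies_lt_iff H G h).2 h')⟩

theorem bootStep_comap {α α' β β' : Type*} [Finite β] (H : SimpleGraph α) (G : SimpleGraph β)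
    (e : β' ≃ β) (k : α' ≃ α) :
    bootStep (H.comap k) (G.comap e) = (bootStep H G).comap e := by
  have : Finite β' := Finite.of_equiv _ e.symm
  ext u v
  rw [bootStep_adj, comap_adj, comap_adj, bootStep_adj]
  refine or_congr_right (and_congr e.injective.ne_iff.symm (and_congr_right fun _ => ?_))
  constructor
  · rintro ⟨f, hf, a, b, hab, rfl, rfl, h⟩
    refine ⟨e ∘ f ∘ k.symm, e.injective.comp (hf.comp k.symm.injective), k a, k b, hab,
      by simp, by simp, fun c d hcd hne => h _ _ (by simpa using hcd) fun h' => hne ?_⟩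
    simpa using congrArg (Sym2.map k) h'
  · rintro ⟨f, hf, a, b, hab, hu, hv, h⟩
    refine ⟨e.symm ∘ f ∘ k, e.symm.injective.comp (hf.comp k.injective), k.symm a, k.symm b,
      by simpa using hab, by simp [hu], by simp [hv], fun c d hcd hne => ?_⟩
    have := h (k c) (k d) hcd fun h' => hne (by simpa using congrArg (Sym2.map k.symm) h')
    simpa using this

/-- If the process visits pairwise consecutive-distinct graphs up to time `T`, then its running
time is at least `T`. Finiteness is needed: an infinite process could have junk running time `0`. -/
theorem le_runningTime {α β : Type*} [Finite β] (H : SimpleGraph α) (G : SimpleGraph β) (T : ℕ)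
    (h : ∀ s < T, bootProcess H G s ≠ bootProcess H G (s + 1)) : T ≤ runningTime H G := by
  have hmono : Monotone (bootProcess H G) :=
    monotone_nat_of_le_succ fun i => (le_sup_left : bootProcess H G i ≤ bootStep H _)
  obtain ⟨N, hN⟩ := WellFoundedGT.monotone_chain_condition ⟨bootProcess H G, hmono⟩
  refine le_csInf ⟨N, hN (N + 1) (Nat.le_succ N)⟩ fun s hs => ?_
  by_contra hlt
  exact h s (not_le.1 hlt) hs

theorem runningTime_le_max {α : Type*} (H : SimpleGraph α) {n : ℕ} (G : SimpleGraph (Fin n)) :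
    runningTime H G ≤ maxRunningTime H n :=
  le_csSup (Set.finite_range fun G : SimpleGraph (Fin n) => runningTime H G).bddAbove ⟨G, rfl⟩

/-! ### The gadget controlling the minimum degree -/

/-- The graph `K_t ∨ (K_14 ∪ A)`: a clique on `Fin t ⊕ Fin 14` whose `t` vertices `inl (inl _)`
(the hubs) are moreover joined to every vertex of `A`. -/
def gad (t : ℕ) {γ : Type*} (A : SimpleGraph γ) : SimpleGraph ((Fin t ⊕ Fin 14) ⊕ γ) where
  Adj
    | .inl k, .inl k' => k ≠ k'
    | .inl (.inl _), .inr _ => True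
    | .inl (.inr _), .inr _ => False
    | .inr _, .inl (.inl _) => True
    | .inr _, .inl (.inr _) => False
    | .inr x, .inr y => A.Adj x y
  symm := ⟨by
    rintro (k | x) (k' | y)
    · exact fun h => Ne.symm h
    · rcases k with k | k <;> exact id
    · rcases k' with k | k <;> exact id
    · exact fun h => SimpleGraph.Adj.symm (G := A) h⟩
  loopless := ⟨by
    rintro (k | x)
    · exact fun h => h rfl
    · exact fun h => A.loopless.irrefl x h⟩

/-- The complete graph on `C` together with one isolated vertex `none`. -/
def core (C : Type*) : SimpleGraph (Option C) where
  Adj x y := x ≠ y ∧ x ≠ none ∧ y ≠ none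
  symm := ⟨fun _ _ h => ⟨h.1.symm, h.2.2, h.2.1⟩⟩
  loopless := ⟨fun _ h => h.1 rfl⟩

section gad
variable {t : ℕ} {γ : Type*} {A : SimpleGraph γ}

@[simp] theorem gad_ll {k k' : Fin t ⊕ Fin 14} : (gad t A).Adj (.inl k) (.inl k') ↔ k ≠ k' :=
  Iff.rfl
@[simp] theorem gad_hr {i : Fin t} {x : γ} : (gad t A).Adj (.inl (.inl i)) (.inr x) := trivial
@[simp] theorem gad_rh {i : Fin t} {x : γ} : (gad t A).Adj (.inr x) (.inl (.inl i)) := trivial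
@[simp] theorem gad_br {i : Fin 14} {x : γ} : ¬ (gad t A).Adj (.inl (.inr i)) (.inr x) := id
@[simp] theorem gad_rb {i : Fin 14} {x : γ} : ¬ (gad t A).Adj (.inr x) (.inl (.inr i)) := id
@[simp] theorem gad_rr {x y : γ} : (gad t A).Adj (.inr x) (.inr y) ↔ A.Adj x y := Iff.rfl

end gad

/-- Rigidity of the gadget: if `A` has no `K_13`, then a copy of `gad t B` minus an edge in
`gad t A` maps clique to clique and hubs to hubs, so the missing edge corresponds to one in `B`.
The big clique is recognised by its size, the hubs by their neighbours outside it. -/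
theorem gad_rigid {t : ℕ} {γ δ : Type*} [Nontrivial δ] {A : SimpleGraph γ} (B : SimpleGraph δ)
    (hA : A.CliqueFree 13)
    {f : (Fin t ⊕ Fin 14) ⊕ δ → (Fin t ⊕ Fin 14) ⊕ γ} (hf : Function.Injective f)
    {a b : (Fin t ⊕ Fin 14) ⊕ δ} (hab : (gad t B).Adj a b) (hn : ¬ (gad t A).Adj (f a) (f b))
    (h : ∀ c d, (gad t B).Adj c d → s(c, d) ≠ s(a, b) → (gad t A).Adj (f c) (f d)) :
    ∃ g : δ → γ, Function.Injective g ∧ (∀ w, f (.inr w) = .inr (g w)) ∧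
      ∃ a' b', a = .inr a' ∧ b = .inr b' := by
  classical
  have hfi : Function.Injective fun k => f (.inl k) := hf.comp Sum.inl_injective
  -- `r` is an end of the missing edge inside the clique, if there is one
  obtain ⟨r, hr⟩ : ∃ r : Fin t ⊕ Fin 14, ∀ k, a = .inl k → k = r := by
    rcases a with k | w
    · exact ⟨k, fun k' h' => (Sum.inl_injective h').symm⟩
    · exact ⟨.inr 0, fun k' h' => by simp at h'⟩
  set S : Finset (Fin t ⊕ Fin 14) := Finset.univ.erase r with hS
  have hScard : S.card = t + 13 := by simp [hS]
  have hSadj : ∀ k ∈ S, ∀ k' ∈ S, k ≠ k' → (gad t A).Adj (f (.inl k)) (f (.inl k')) := by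
    intro k hk k' hk' hne
    refine h _ _ hne fun he => ?_
    rcases Sym2.eq_iff.1 he with ⟨h1, -⟩ | ⟨-, h1⟩
    · exact (Finset.mem_erase.1 hk).1 (hr _ h1.symm)
    · exact (Finset.mem_erase.1 hk').1 (hr _ h1.symm)
  have hSl : ∀ k ∈ S, ∃ k', f (.inl k) = .inl k' := by
    intro k₀ hk₀
    by_contra hcon
    obtain ⟨z, hz⟩ : ∃ z, f (.inl k₀) = .inr z := by
      rcases hz : f (.inl k₀) with k' | z
      · exact absurd ⟨k', hz⟩ hcon
      · exact ⟨z, rfl⟩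
    set Q := S.image fun k => f (.inl k) with hQ
    have hQcard : Q.card = t + 13 := by
      rw [hQ, Finset.card_image_of_injective _ hfi, hScard]
    have hl : Q.toLeft.card ≤ t := by
      have : Q.toLeft ⊆ (Finset.univ : Finset (Fin t)).image Sum.inl := by
        intro k' hk'
        rw [Finset.mem_toLeft, hQ, Finset.mem_image] at hk'
        obtain ⟨k, hk, hkk⟩ := hk'
        rcases k' with i | i
        · simp
        · exfalso
          have := hSadj k hk k₀ hk₀ (by rintro rfl; simp [hz] at hkk)
          rw [hkk, hz] at this
          exact gad_br this
      refine (Finset.card_le_card this).trans (Finset.card_image_le.trans (by simp))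
    have hrc : 13 ≤ Q.toRight.card := by
      have := Finset.card_toLeft_add_card_toRight (u := Q)
      omega
    refine hA.mono hrc Q.toRight ⟨?_, rfl⟩
    intro x hx y hy hxy
    simp only [Finset.mem_coe, Finset.mem_toRight, hQ, Finset.mem_image] at hx hy
    obtain ⟨k, hk, hkx⟩ := hx
    obtain ⟨l, hl, hly⟩ := hy
    have := hSadj k hk l hl (by rintro rfl; exact hxy (Sum.inr_injective (hkx.symm.trans hly)))
    rwa [hkx, hly] at this
  have hrl : ∃ k', f (.inl r) = .inl k' := by
    by_contra hcon
    obtain ⟨z, hz⟩ : ∃ z, f (.inl r) = .inr z := by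
      rcases hz : f (.inl r) with k' | z
      · exact absurd ⟨k', hz⟩ hcon
      · exact ⟨z, rfl⟩
    set S' := S.filter fun k => b ≠ .inl k with hS'
    have h1 : (S.filter fun k => ¬ (b ≠ .inl k)).card ≤ 1 := by
      rw [Finset.card_le_one]
      intro x hx y hy
      simp only [ne_eq, not_not, Finset.mem_filter] at hx hy
      exact Sum.inl_injective (hx.2.symm.trans hy.2)
    have h2 : S'.card + (S.filter fun k => ¬ (b ≠ .inl k)).card = S.card := by
      convert Finset.card_filter_add_card_filter_not (s := S) fun k => b ≠ .inl k
    have h3 : S'.card ≤ t := by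
      have hsub : S'.image (fun k => f (.inl k)) ⊆
          (Finset.univ : Finset (Fin t)).image fun i => .inl (.inl i) := by
        intro y hy
        obtain ⟨k, hk, rfl⟩ := Finset.mem_image.1 hy
        obtain ⟨hkS, hkb⟩ := Finset.mem_filter.1 hk
        have hkr := (Finset.mem_erase.1 hkS).1
        obtain ⟨k', hk'⟩ := hSl k hkS
        have hadj := h (.inl k) (.inl r) hkr fun he => by
          rcases Sym2.eq_iff.1 he with ⟨h1, -⟩ | ⟨h1, -⟩
          · exact hkr (hr _ h1.symm)
          · exact hkb h1.symm
        simp only [hk', hz] at hadj ⊢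
        rcases k' with i | i
        · simp
        · exact absurd hadj gad_br
      have := Finset.card_le_card hsub
      rw [Finset.card_image_of_injective _ hfi] at this
      exact this.trans (Finset.card_image_le.trans (by simp))
    omega
  have hl : ∀ k, ∃ k', f (.inl k) = .inl k' := by
    intro k
    by_cases hk : k = r
    · exact hk ▸ hrl
    · exact hSl k (Finset.mem_erase.2 ⟨hk, Finset.mem_univ _⟩)
  choose σ hσ using hl
  have hσi : Function.Injective σ := fun x y hxy =>
    Sum.inl_injective (hf (by rw [hσ, hσ, hxy]))
  have hσs : Function.Surjective σ := Finite.surjective_of_injective hσi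
  have hrr : ∀ w, ∃ z, f (.inr w) = .inr z := by
    intro w
    rcases hz : f (.inr w) with k' | z
    · obtain ⟨k, rfl⟩ := hσs k'
      rw [← hσ] at hz
      exact absurd (hf hz) (by simp)
    · exact ⟨z, rfl⟩
  choose g hg using hrr
  have hhub : ∀ i, ∃ j, σ (.inl i) = .inl j := by
    intro i
    rcases hj : σ (.inl i) with j | j
    · exact ⟨j, rfl⟩
    · exfalso
      have key : ∀ w : δ, s((.inl (.inl i) : (Fin t ⊕ Fin 14) ⊕ δ), .inr w) = s(a, b) := by
        intro w
        by_contra hne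
        have := h (.inl (.inl i)) (.inr w) gad_hr hne
        rw [hσ, hj, hg] at this
        exact gad_br this
      obtain ⟨w, w', hw⟩ := exists_pair_ne δ
      have := (key w).trans (key w').symm
      simp [hw] at this
  refine ⟨g, fun x y hxy => Sum.inr_injective (hf (by rw [hg, hg, hxy])), hg, ?_⟩
  rcases a with (i | i) | a' <;> rcases b with (j | j) | b'
  all_goals first
    | exact ⟨_, _, rfl, rfl⟩
    | exact absurd hab gad_br
    | exact absurd hab gad_rb
    | (exfalso
       apply hn
       rw [hσ, hσ]
       exact fun he => hab (hσi he))
    | (exfalso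
       apply hn
       obtain ⟨j, hj⟩ := hhub ‹_›
       rw [hσ, hg, hj]
       trivial)

theorem bootStep_gad {t : ℕ} {γ δ : Type*} [Finite γ] [Nontrivial δ] (A : SimpleGraph γ)
    (B : SimpleGraph δ) (hA : A.CliqueFree 13) :
    bootStep (gad t B) (gad t A) = gad t (bootStep B A) := by
  ext u v
  rw [bootStep_adj]
  constructor
  · rintro (h | ⟨huv, hn, f, hf, a, b, hab, rfl, rfl, h⟩)
    · rcases u with (i | i) | u <;> rcases v with (j | j) | v
      all_goals first
        | exact h
        | exact (bootStep_adj B A _ _).2 (Or.inl h)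
    · obtain ⟨g, hg, hfg, a', b', rfl, rfl⟩ := gad_rigid B hA hf hab hn h
      rw [hfg, hfg] at hn huv ⊢
      refine (bootStep_adj B A _ _).2 (Or.inr ⟨fun he => huv (by rw [he]), hn, g, hg, a', b', hab,
        rfl, rfl, fun c d hcd hne => ?_⟩)
      have := h (.inr c) (.inr d) hcd fun he => hne (by
        simpa using he)
      rwa [hfg, hfg] at this
  · intro h
    by_cases hn : (gad t A).Adj u v
    · exact Or.inl hn
    refine Or.inr ⟨h.ne, hn, ?_⟩
    rcases u with k | u
    · exfalso
      apply hn
      rcases v with k' | v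
      · exact h
      · rcases k with k | k <;> exact h
    rcases v with k' | v
    · exfalso
      apply hn
      rcases k' with k | k <;> exact h
    rw [gad_rr, bootStep_adj] at h
    rcases h with h | ⟨-, -, g, hg, a, b, hab, rfl, rfl, h⟩
    · exact absurd h hn
    refine ⟨Sum.map id g, Sum.map_injective.2 ⟨Function.injective_id, hg⟩, .inr a, .inr b, hab,
      rfl, rfl, ?_⟩
    rintro ((i | i) | c) ((j | j) | d) hcd hne
    all_goals first
      | exact hcd
      | exact h c d hcd fun he => hne (by simpa using he)

/-! ### The ladder graph -/

/-- `x` and `y` are equal or cyclically consecutive. -/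
def near {R : Type*} [CommRing R] (x y : R) : Prop := x = y ∨ x = y + 1 ∨ y = x + 1

theorem near.symm {R : Type*} [CommRing R] {x y : R} (h : near x y) : near y x := by
  rcases h with h | h | h
  · exact Or.inl h.symm
  · exact Or.inr (Or.inr h)
  · exact Or.inr (Or.inl h)

/-- The host graph of the slow process. Its vertices are blocks of three vertices over the
elements of two cyclic rings `R` and `S`, plus isolated vertices `P`. Blocks on one side are
completely joined if they are equal or consecutive. Reducing modulo `4` by `φ` and `ψ`, the
blocks over `x : R` and `y : S` are completely joined if `φ x - ψ y = ± 1`, not joined if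
`φ x - ψ y = 2`, and joined up to the edge `(x, 0) (y, 0)` if `φ x = ψ y`; that last edge is
present exactly when `A x y` holds. -/
def ladder {R S : Type*} [CommRing R] [CommRing S] (P : Type*) (φ : R →+* ZMod 4)
    (ψ : S →+* ZMod 4) (A : R → S → Prop) : SimpleGraph ((R × Fin 3) ⊕ ((S × Fin 3) ⊕ P)) where
  Adj
    | .inl u, .inl v => u ≠ v ∧ near u.1 v.1
    | .inr (.inl u), .inr (.inl v) => u ≠ v ∧ near u.1 v.1
    | .inl u, .inr (.inl v) =>
        φ u.1 - ψ v.1 ≠ 2 ∧ (φ u.1 = ψ v.1 → u.2 = 0 → v.2 = 0 → A u.1 v.1)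
    | .inr (.inl v), .inl u =>
        φ u.1 - ψ v.1 ≠ 2 ∧ (φ u.1 = ψ v.1 → u.2 = 0 → v.2 = 0 → A u.1 v.1)
    | _, _ => False
  symm := ⟨by
    rintro (u | u | u) (v | v | v)
    all_goals first
      | exact fun h => ⟨h.1.symm, h.2.symm⟩
      | exact id⟩
  loopless := ⟨by
    rintro (u | u | u)
    · exact fun h => h.1 rfl
    · exact fun h => h.1 rfl
    · exact id⟩

theorem one_ne {R : Type*} [CommRing R] (φ : R →+* ZMod 4) : (1 : R) ≠ 0 := fun h => by
  have := congrArg φ h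
  simp only [map_one, map_zero] at this
  exact absurd this (by decide)

theorem two_ne {R : Type*} [CommRing R] (φ : R →+* ZMod 4) : (2 : R) ≠ 0 := fun h => by
  have := congrArg φ h
  simp only [map_ofNat, map_zero] at this
  exact absurd this (by decide)

theorem three_ne {R : Type*} [CommRing R] (φ : R →+* ZMod 4) : (3 : R) ≠ 0 := fun h => by
  have := congrArg φ h
  simp only [map_ofNat, map_zero] at this
  exact absurd this (by decide)

/-- An element near both `a` and `a + 1` is one of them. -/
theorem near_both {R : Type*} [CommRing R] (φ : R →+* ZMod 4)
    {a z : R} (h1 : near z a) (h2 : near z (a + 1)) : z = a ∨ z = a + 1 := by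
  rcases h1 with h | h | h
  · exact Or.inl h
  · exact Or.inr h
  · exfalso
    rcases h2 with h' | h' | h'
    · exact two_ne φ (by linear_combination -h - h')
    · exact three_ne φ (by linear_combination -h - h')
    · exact one_ne φ (by linear_combination h' - h)

theorem near_family {R : Type*} [CommRing R] (φ : R →+* ZMod 4)
    (Q : Finset (R × Fin 3)) (hQ : ∀ u ∈ Q, ∀ v ∈ Q, near u.1 v.1) :
    ∃ a : R, ∀ u ∈ Q, u.1 = a ∨ u.1 = a + 1 := by
  by_cases h : ∃ u ∈ Q, ∃ v ∈ Q, v.1 = u.1 + 1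
  · obtain ⟨u, hu, v, hv, huv⟩ := h
    exact ⟨u.1, fun w hw => near_both φ (hQ w hw u hu) (huv ▸ hQ w hw v hv)⟩
  · rcases Q.eq_empty_or_nonempty with rfl | ⟨u, hu⟩
    · exact ⟨0, by simp⟩
    · refine ⟨u.1, fun v hv => ?_⟩
      rcases hQ v hv u hu with h' | h' | h'
      · exact Or.inl h'
      · exact Or.inr h'
      · exact absurd ⟨v, hv, u, hu, h'⟩ h

theorem subset_blocks {R : Type*} [CommRing R] [DecidableEq R] {Q : Finset (R × Fin 3)} {a : R}
    (h : ∀ u ∈ Q, u.1 = a ∨ u.1 = a + 1) : Q ⊆ {a, a + 1} ×ˢ Finset.univ := by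
  intro u hu
  simpa using h u hu

theorem card_blocks {R : Type*} [CommRing R] [DecidableEq R] (a : R) :
    (({a, a + 1} : Finset R) ×ˢ (Finset.univ : Finset (Fin 3))).card ≤ 6 := by
  rw [Finset.card_product]
  have := Finset.card_le_two (a := a) (b := a + 1)
  simp only [Finset.card_univ, Fintype.card_fin]
  omega

theorem card_near {R : Type*} [CommRing R] (φ : R →+* ZMod 4)
    (Q : Finset (R × Fin 3)) (hQ : ∀ u ∈ Q, ∀ v ∈ Q, near u.1 v.1) :
    Q.card ≤ 6 := by
  classical
  obtain ⟨a, ha⟩ := near_family φ Q hQ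
  exact (Finset.card_le_card (subset_blocks ha)).trans (card_blocks a)

/-- Six vertices on one side cannot have exactly one non-adjacent pair: the remaining four
vertices meet two consecutive blocks, and the vertices near both lie in these blocks. -/
theorem near_of_missing {R : Type*} [CommRing R] (φ : R →+* ZMod 4)
    (Q : Finset (R × Fin 3)) (u v : R × Fin 3) (hu : u ∈ Q) (hv : v ∈ Q)
    (h6 : 6 ≤ Q.card)
    (hQ : ∀ x ∈ Q, ∀ y ∈ Q, x = y ∨ s(x, y) = s(u, v) ∨ near x.1 y.1) : near u.1 v.1 := by
  classical
  set Q' := (Q.erase u).erase v with hQ'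
  have hc : 4 ≤ Q'.card := by
    have h1 := Finset.pred_card_le_card_erase (s := Q) (a := u)
    have h2 := Finset.pred_card_le_card_erase (s := Q.erase u) (a := v)
    rw [hQ']
    omega
  have hmem : ∀ x ∈ Q', x ∈ Q ∧ x ≠ u ∧ x ≠ v := fun x hx =>
    ⟨Finset.mem_of_mem_erase (Finset.mem_of_mem_erase hx),
      (Finset.mem_erase.1 (Finset.mem_of_mem_erase hx)).1, (Finset.mem_erase.1 hx).1⟩
  have hnear : ∀ x ∈ Q', ∀ y ∈ Q, near x.1 y.1 := by
    intro x hx y hy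
    obtain ⟨h1, h2, h3⟩ := hmem x hx
    rcases hQ x h1 y hy with h | h | h
    · exact Or.inl (congrArg _ h)
    · rcases Sym2.eq_iff.1 h with ⟨h, -⟩ | ⟨h, -⟩
      · exact absurd h h2
      · exact absurd h h3
    · exact h
  obtain ⟨a, ha⟩ := near_family φ Q' fun x hx y hy => hnear x hx y (hmem y hy).1
  have hsub := subset_blocks ha
  -- one block has only three vertices
  have hex : ∀ b : R, ∃ x ∈ Q', x.1 ≠ b := by
    intro b
    by_contra hcon
    push Not at hcon
    have : Q' ⊆ ({b} : Finset R) ×ˢ (Finset.univ : Finset (Fin 3)) := by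
      intro x hx
      exact Finset.mem_product.2 ⟨Finset.mem_singleton.2 (hcon x hx), Finset.mem_univ _⟩
    have := Finset.card_le_card this
    rw [Finset.card_product] at this
    simp only [Finset.card_singleton, Finset.card_univ, Fintype.card_fin] at this
    omega
  obtain ⟨x, hx, hxa⟩ := hex (a + 1)
  obtain ⟨y, hy, hya⟩ := hex a
  have hx' : x.1 = a := (ha x hx).resolve_right hxa
  have hy' : y.1 = a + 1 := (ha y hy).resolve_left hya
  have hz : ∀ z ∈ Q, z.1 = a ∨ z.1 = a + 1 := fun z hz =>
    near_both φ (hx' ▸ (hnear x hx z hz).symm) (hy' ▸ (hnear y hy z hz).symm)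
  rcases hz u hu with h1 | h1 <;> rcases hz v hv with h2 | h2 <;> rw [h1, h2]
  · exact Or.inl rfl
  · exact Or.inr (Or.inr rfl)
  · exact Or.inr (Or.inl rfl)
  · exact Or.inl rfl

theorem blocks_full {R : Type*} [CommRing R] (φ : R →+* ZMod 4)
    (Q : Finset (R × Fin 3)) (hQ : ∀ u ∈ Q, ∀ v ∈ Q, near u.1 v.1)
    (h6 : 6 ≤ Q.card) : ∃ a : R, ∀ u, u ∈ Q ↔ u.1 = a ∨ u.1 = a + 1 := by
  classical
  obtain ⟨a, ha⟩ := near_family φ Q hQ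
  have := Finset.eq_of_subset_of_card_le (subset_blocks ha) ((card_blocks a).trans h6)
  exact ⟨a, fun u => by rw [this]; simp⟩

section ladder
variable {R S P : Type*} [CommRing R] [CommRing S] {φ : R →+* ZMod 4} {ψ : S →+* ZMod 4}
  {A : R → S → Prop}

theorem ladder_cliqueFree : (ladder P φ ψ A).CliqueFree 13 := by
  classical
  rintro Q ⟨hQ, hcard⟩
  have hX := card_near φ Q.toLeft fun u hu v hv => by
    by_cases h : u = v
    · exact Or.inl (congrArg _ h)
    · exact (hQ (Finset.mem_toLeft.1 hu) (Finset.mem_toLeft.1 hv)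
        (fun h' => h (Sum.inl_injective h'))).2
  have hY := card_near ψ Q.toRight.toLeft fun u hu v hv => by
    rw [Finset.mem_toLeft, Finset.mem_toRight] at hu hv
    by_cases h : u = v
    · exact Or.inl (congrArg _ h)
    · exact (hQ hu hv (fun h' => h (Sum.inl_injective (Sum.inr_injective h')))).2
  have hP : Q.toRight.toRight = ∅ := by
    rw [Finset.eq_empty_iff_forall_notMem]
    intro p hp
    rw [Finset.mem_toRight, Finset.mem_toRight] at hp
    obtain ⟨z, hz, hne⟩ := Finset.exists_mem_ne (by omega : 1 < Q.card) (.inr (.inr p))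
    have := hQ hz hp hne
    rcases z with z | z | z <;> exact this
  have h1 := Finset.card_toLeft_add_card_toRight (u := Q)
  have h2 := Finset.card_toLeft_add_card_toRight (u := Q.toRight)
  rw [hP, Finset.card_empty] at h2
  omega

/-- A `K_12` minus an edge in the ladder consists of two consecutive blocks on each side, aligned
modulo `4`, the missing edge being one of the two unstable ones; the other one is present. -/
theorem ladder_missing {Q : Finset ((R × Fin 3) ⊕ ((S × Fin 3) ⊕ P))} (hcard : Q.card = 12)
    {u v : (R × Fin 3) ⊕ ((S × Fin 3) ⊕ P)} (hu : u ∈ Q) (hv : v ∈ Q) (huv : u ≠ v)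
    (hn : ¬ (ladder P φ ψ A).Adj u v)
    (hQ : ∀ x ∈ Q, ∀ y ∈ Q, x = y ∨ s(x, y) = s(u, v) ∨ (ladder P φ ψ A).Adj x y) :
    ∃ x y, s(u, v) = s(.inl (x, 0), .inr (.inl (y, 0))) ∧ φ x = ψ y ∧
      (A (x + 1) (y + 1) ∨ A (x - 1) (y - 1)) := by
  classical
  have hX : ∀ x ∈ Q.toLeft, ∀ y ∈ Q.toLeft,
      x = y ∨ s((.inl x : (R × Fin 3) ⊕ ((S × Fin 3) ⊕ P)), .inl y) = s(u, v) ∨ near x.1 y.1 := by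
    intro x hx y hy
    rcases hQ _ (Finset.mem_toLeft.1 hx) _ (Finset.mem_toLeft.1 hy) with h | h | h
    · exact Or.inl (Sum.inl_injective h)
    · exact Or.inr (Or.inl h)
    · exact Or.inr (Or.inr h.2)
  have hY : ∀ x ∈ Q.toRight.toLeft, ∀ y ∈ Q.toRight.toLeft,
      x = y ∨ s((.inr (.inl x) : (R × Fin 3) ⊕ ((S × Fin 3) ⊕ P)), .inr (.inl y)) = s(u, v) ∨
        near x.1 y.1 := by
    intro x hx y hy
    rw [Finset.mem_toLeft, Finset.mem_toRight] at hx hy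
    rcases hQ _ hx _ hy with h | h | h
    · exact Or.inl (Sum.inl_injective (Sum.inr_injective h))
    · exact Or.inr (Or.inl h)
    · exact Or.inr (Or.inr h.2)
  have hP : Q.toRight.toRight = ∅ := by
    rw [Finset.eq_empty_iff_forall_notMem]
    intro p hp
    rw [Finset.mem_toRight, Finset.mem_toRight] at hp
    have hex : ∃ z ∈ Q, z ∉ ({u, v, .inr (.inr p)} : Finset _) :=
      Finset.exists_mem_notMem_of_card_lt_card (by
        have := Finset.card_le_three (a := u) (b := v) (c := .inr (.inr p))
        omega)
    obtain ⟨z, hz, hne⟩ := hex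
    simp only [Finset.mem_insert, Finset.mem_singleton, not_or] at hne
    rcases hQ z hz _ hp with h | h | h
    · exact hne.2.2 h
    · rcases Sym2.eq_iff.1 h with ⟨h, -⟩ | ⟨h, -⟩
      · exact hne.1 h
      · exact hne.2.1 h
    · rcases z with z | z | z <;> exact h
  have h1 := Finset.card_toLeft_add_card_toRight (u := Q)
  have h2 := Finset.card_toLeft_add_card_toRight (u := Q.toRight)
  rw [hP, Finset.card_empty] at h2
  -- the missing edge is not inside a side
  have hnX : ∀ x y, ¬ (s((.inl x : (R × Fin 3) ⊕ ((S × Fin 3) ⊕ P)), .inl y) = s(u, v)) := by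
    intro x y h
    have hYn := card_near ψ Q.toRight.toLeft fun x' hx' y' hy' => by
      rcases hY x' hx' y' hy' with h' | h' | h'
      · exact Or.inl (congrArg _ h')
      · exact absurd (h'.trans h.symm) (by simp)
      · exact h'
    have hxy : x ∈ Q.toLeft ∧ y ∈ Q.toLeft ∧ x ≠ y ∧ ¬ near x.1 y.1 := by
      simp only [Finset.mem_toLeft]
      rcases Sym2.eq_iff.1 h with ⟨rfl, rfl⟩ | ⟨rfl, rfl⟩
      · exact ⟨hu, hv, fun h => huv (congrArg _ h), fun h => hn ⟨fun h => huv (congrArg _ h), h⟩⟩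
      · exact ⟨hv, hu, fun h => huv (congrArg _ h.symm),
          fun h => hn ⟨fun h => huv (congrArg _ h), h.symm⟩⟩
    refine hxy.2.2.2 (near_of_missing φ Q.toLeft x y hxy.1 hxy.2.1 (by omega)
      fun x' hx' y' hy' => ?_)
    rcases hX x' hx' y' hy' with h' | h' | h'
    · exact Or.inl h'
    · right; left
      have := h'.trans h.symm
      simpa using this
    · exact Or.inr (Or.inr h')
  have hnY : ∀ x y, ¬ (s((.inr (.inl x) : (R × Fin 3) ⊕ ((S × Fin 3) ⊕ P)), .inr (.inl y)) =
      s(u, v)) := by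
    intro x y h
    have hXn := card_near φ Q.toLeft fun x' hx' y' hy' => by
      rcases hX x' hx' y' hy' with h' | h' | h'
      · exact Or.inl (congrArg _ h')
      · exact absurd h' (hnX _ _)
      · exact h'
    have hxy : x ∈ Q.toRight.toLeft ∧ y ∈ Q.toRight.toLeft ∧ x ≠ y ∧ ¬ near x.1 y.1 := by
      simp only [Finset.mem_toLeft, Finset.mem_toRight]
      rcases Sym2.eq_iff.1 h with ⟨rfl, rfl⟩ | ⟨rfl, rfl⟩
      · exact ⟨hu, hv, fun h => huv (by rw [h]), fun h => hn ⟨fun h => huv (by rw [h]), h⟩⟩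
      · exact ⟨hv, hu, fun h => huv (by rw [h]), fun h => hn ⟨fun h => huv (by rw [h]), h.symm⟩⟩
    refine hxy.2.2.2 (near_of_missing ψ Q.toRight.toLeft x y hxy.1 hxy.2.1 (by omega)
      fun x' hx' y' hy' => ?_)
    rcases hY x' hx' y' hy' with h' | h' | h'
    · exact Or.inl h'
    · right; left
      have := h'.trans h.symm
      simpa using this
    · exact Or.inr (Or.inr h')
  have hX' : ∀ x ∈ Q.toLeft, ∀ y ∈ Q.toLeft, near x.1 y.1 := fun x hx y hy => by
    rcases hX x hx y hy with h | h | h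
    · exact Or.inl (congrArg _ h)
    · exact absurd h (hnX _ _)
    · exact h
  have hY' : ∀ x ∈ Q.toRight.toLeft, ∀ y ∈ Q.toRight.toLeft, near x.1 y.1 := fun x hx y hy => by
    rcases hY x hx y hy with h | h | h
    · exact Or.inl (congrArg _ h)
    · exact absurd h (hnY _ _)
    · exact h
  have hXc := card_near φ _ hX'
  have hYc := card_near ψ _ hY'
  obtain ⟨a, ha⟩ := blocks_full φ _ hX' (by omega)
  obtain ⟨b, hb⟩ := blocks_full ψ _ hY' (by omega)
  simp only [Finset.mem_toLeft, Finset.mem_toRight] at ha hb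
  -- orient the missing edge
  obtain ⟨p, q, hpq⟩ : ∃ p q, s(u, v) =
      s((.inl p : (R × Fin 3) ⊕ ((S × Fin 3) ⊕ P)), .inr (.inl q)) := by
    have hmem : ∀ z, .inr (.inr z) ∉ Q := fun z hz => by
      rw [← Finset.mem_toRight, ← Finset.mem_toRight, hP] at hz
      simp at hz
    rcases u with u | u | u
    · rcases v with v | v | v
      · exact absurd rfl (hnX u v)
      · exact ⟨u, v, rfl⟩
      · exact absurd hv (hmem v)
    · rcases v with v | v | v
      · exact ⟨v, u, Sym2.eq_swap⟩
      · exact absurd rfl (hnY u v)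
      · exact absurd hv (hmem v)
    · exact absurd hu (hmem u)
  have hpQ : p.1 = a ∨ p.1 = a + 1 := by
    rw [← ha]
    rcases Sym2.eq_iff.1 hpq with ⟨h, -⟩ | ⟨-, h⟩ <;> rw [← h] <;> assumption
  have hqQ : q.1 = b ∨ q.1 = b + 1 := by
    rw [← hb]
    rcases Sym2.eq_iff.1 hpq with ⟨-, h⟩ | ⟨h, -⟩ <;> rw [← h] <;> assumption
  have hn' : ¬ (ladder P φ ψ A).Adj (.inl p) (.inr (.inl q)) := by
    rcases Sym2.eq_iff.1 hpq with ⟨h, h'⟩ | ⟨h, h'⟩ <;> rw [← h, ← h']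
    · exact hn
    · exact fun h => hn h.symm
  have hadj : ∀ x y c d, (x = a ∨ x = a + 1) → (y = b ∨ y = b + 1) → ((x, c) ≠ p ∨ (y, d) ≠ q) →
      (ladder P φ ψ A).Adj (.inl (x, c)) (.inr (.inl (y, d))) := by
    intro x y c d hx hy hne
    rcases hQ _ ((ha (x, c)).2 hx) _ ((hb (y, d)).2 hy) with h | h | h
    · simp at h
    · rw [hpq] at h
      simp only [Sym2.eq_iff, Sum.inl.injEq, Sum.inr.injEq, reduceCtorEq, and_self,
        or_false] at h
      rcases hne with h' | h'
      · exact absurd h.1 h'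
      · exact absurd h.2 h'
    · exact h
  have hdiff : ∀ x y, (x = a ∨ x = a + 1) → (y = b ∨ y = b + 1) → φ x - ψ y ≠ 2 := by
    intro x y hx hy
    by_cases hp : p.2 = 1
    · exact (hadj x y 2 2 hx hy (Or.inl fun h => by rw [← h] at hp; simp at hp)).1
    · exact (hadj x y 1 1 hx hy (Or.inl fun h => by rw [← h] at hp; simp at hp)).1
  have hab : φ a = ψ b := by
    have e1 := hdiff a b (Or.inl rfl) (Or.inl rfl)
    have e2 := hdiff (a + 1) b (Or.inr rfl) (Or.inl rfl)
    have e3 := hdiff a (b + 1) (Or.inl rfl) (Or.inr rfl)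
    simp only [map_add, map_one] at e2 e3
    generalize φ a = x at *
    generalize ψ b = y at *
    revert x y
    decide
  have hpq2 : φ p.1 = ψ q.1 ∧ p.2 = 0 ∧ q.2 = 0 := by
    by_contra hcon
    exact hn' ⟨hdiff _ _ hpQ hqQ, fun h1 h2 h3 => absurd ⟨h1, h2, h3⟩ hcon⟩
  obtain ⟨hφ, hp0, hq0⟩ := hpq2
  have hone : (1 : ZMod 4) ≠ 0 := by decide
  obtain ⟨p, c⟩ := p
  obtain ⟨q, d⟩ := q
  dsimp only at hφ hp0 hq0 hpQ hqQ
  subst hp0 hq0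
  refine ⟨p, q, hpq, hφ, ?_⟩
  rcases hpQ with rfl | rfl <;> rcases hqQ with rfl | rfl
  · left
    refine (hadj (p + 1) (q + 1) 0 0 (Or.inr rfl) (Or.inr rfl) (Or.inl fun h => ?_)).2
      (by simp [hab]) rfl rfl
    exact one_ne φ (by simpa using h)
  · exact absurd (by simpa [hab] using hφ) hone
  · exact absurd (by simpa [hab] using hφ) hone
  · right
    rw [add_sub_cancel_right, add_sub_cancel_right]
    refine (hadj a b 0 0 (Or.inl rfl) (Or.inl rfl) (Or.inl fun h => ?_)).2
      hab rfl rfl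
    exact one_ne φ (by simpa using h)

/-- One step on the ladder: unstable edges spread to diagonally adjacent positions. -/
theorem bootStep_ladder [Finite R] [Finite S] [Finite P] :
    bootStep (core ((Bool × Fin 3) ⊕ (Bool × Fin 3))) (ladder P φ ψ A) =
      ladder P φ ψ fun x y => A x y ∨ (A (x + 1) (y + 1) ∨ A (x - 1) (y - 1)) := by
  classical
  have hmono : ladder P φ ψ A ≤
      ladder P φ ψ fun x y => A x y ∨ (A (x + 1) (y + 1) ∨ A (x - 1) (y - 1)) := by
    rintro (u | u | u) (v | v | v) h
    all_goals first
      | exact h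
      | exact ⟨h.1, fun h1 h2 h3 => Or.inl (h.2 h1 h2 h3)⟩
  apply le_antisymm
  · intro u v huv
    rw [bootStep_adj] at huv
    rcases huv with h | ⟨hne, hn, f, hf, a, b, hab, rfl, rfl, h⟩
    · exact hmono h
    obtain ⟨a, rfl⟩ := Option.ne_none_iff_exists'.1 hab.2.1
    obtain ⟨b, rfl⟩ := Option.ne_none_iff_exists'.1 hab.2.2
    have hfs : Function.Injective fun x => f (some x) := hf.comp (Option.some_injective _)
    obtain ⟨x, y, hxy, hφ, hA⟩ := ladder_missing
      (Q := Finset.univ.image fun x => f (some x))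
      (by rw [Finset.card_image_of_injective _ hfs]; rfl)
      (Finset.mem_image_of_mem _ (Finset.mem_univ a))
      (Finset.mem_image_of_mem _ (Finset.mem_univ b)) hne hn (by
        intro x hx y hy
        obtain ⟨c, -, rfl⟩ := Finset.mem_image.1 hx
        obtain ⟨d, -, rfl⟩ := Finset.mem_image.1 hy
        by_cases hcd : c = d
        · exact Or.inl (by rw [hcd])
        · right
          by_cases hs : s(some c, some d) = s(some a, some b)
          · left
            simpa using congrArg (Sym2.map f) hs
          · right
            exact h _ _ ⟨by simpa using hcd, by simp, by simp⟩ hs)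
    have key : (ladder P φ ψ fun x y => A x y ∨ (A (x + 1) (y + 1) ∨ A (x - 1) (y - 1))).Adj
        (.inl (x, 0)) (.inr (.inl (y, 0))) :=
      ⟨by rw [hφ, sub_self]; decide, fun _ _ _ => Or.inr hA⟩
    rcases Sym2.eq_iff.1 hxy with ⟨h1, h2⟩ | ⟨h1, h2⟩ <;> rw [h1, h2]
    · exact key
    · exact key.symm
  · -- the copy of the core on the blocks `a, a + 1` and `b, b + 1`
    have main : ∀ (a : R) (b : S) (i j : Bool), i ≠ j → φ a = ψ b →
        A (a + i.toNat) (b + i.toNat) → ¬ A (a + j.toNat) (b + j.toNat) →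
        (bootStep (core ((Bool × Fin 3) ⊕ (Bool × Fin 3))) (ladder P φ ψ A)).Adj
          (.inl (a + j.toNat, 0)) (.inr (.inl (b + j.toNat, 0))) := by
      intro a b i j hij hab hA hnA
      have hφj : ∀ i j : Bool, φ (a + i.toNat) = ψ (b + j.toNat) ↔ i = j := by
        intro i j
        simp only [map_add, map_natCast, hab, add_right_inj]
        revert i j
        decide
      have hφ2 : ∀ i j : Bool, φ (a + i.toNat) - ψ (b + j.toNat) ≠ 2 := by
        intro i j
        simp only [map_add, map_natCast, hab, add_sub_add_left_eq_sub]
        revert i j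
        decide
      have hRinj : Function.Injective fun i : Bool => a + (i.toNat : R) := by
        have h1 := one_ne φ
        rintro (_ | _) (_ | _) <;> simp [h1]
      have hSinj : Function.Injective fun i : Bool => b + (i.toNat : S) := by
        have h1 := one_ne ψ
        rintro (_ | _) (_ | _) <;> simp [h1]
      have hRnear : ∀ i j : Bool, near (a + (i.toNat : R)) (a + (j.toNat : R)) := by
        rintro (_ | _) (_ | _) <;> simp [near]
      have hSnear : ∀ i j : Bool, near (b + (i.toNat : S)) (b + (j.toNat : S)) := by
        rintro (_ | _) (_ | _) <;> simp [near]
      rw [bootStep_adj]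
      refine Or.inr ⟨by simp, fun h => hnA (h.2 ((hφj j j).2 rfl) rfl rfl), ?_⟩
      -- the isolated vertex of the core is placed in the block over `a + 2`
      let f : Option ((Bool × Fin 3) ⊕ (Bool × Fin 3)) → (R × Fin 3) ⊕ ((S × Fin 3) ⊕ P)
        | none => .inl (a + 2, 0)
        | some (.inl (i, c)) => .inl (a + i.toNat, c)
        | some (.inr (i, c)) => .inr (.inl (b + i.toNat, c))
      have h2 : ∀ i : Bool, a + 2 ≠ a + (i.toNat : R) := by
        rintro (_ | _) h
        · exact two_ne φ (by simpa using h)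
        · have h' : (2 : R) = 1 := by simpa using h
          exact one_ne φ (by linear_combination h')
      refine ⟨f, ?_, some (.inl (j, 0)), some (.inr (j, 0)), ⟨by simp, by simp, by simp⟩,
        rfl, rfl, ?_⟩
      · rintro (_ | ⟨i, c⟩ | ⟨i, c⟩) (_ | ⟨i', c'⟩ | ⟨i', c'⟩) h
        · rfl
        · exact absurd (congrArg Prod.fst (Sum.inl_injective h)) (h2 _)
        · exact absurd h (by simp [f])
        · exact absurd (congrArg Prod.fst (Sum.inl_injective h)).symm (h2 _)
        · have h' := Prod.ext_iff.1 (Sum.inl_injective h)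
          rw [hRinj h'.1, show c = c' from h'.2]
        · exact absurd h (by simp [f])
        · exact absurd h (by simp [f])
        · exact absurd h (by simp [f])
        · have h' := Prod.ext_iff.1 (Sum.inl_injective (Sum.inr_injective h))
          rw [hSinj h'.1, show c = c' from h'.2]
      · have hcross : ∀ i' j' c d, s((some (.inl (i', c)) : Option ((Bool × Fin 3) ⊕
            (Bool × Fin 3))), some (.inr (j', d))) ≠ s(some (.inl (j, 0)), some (.inr (j, 0))) →
            (ladder P φ ψ A).Adj (.inl (a + i'.toNat, c)) (.inr (.inl (b + j'.toNat, d))) := by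
          intro i' j' c d hne
          refine ⟨hφ2 _ _, fun h1 h2 h3 => ?_⟩
          have h1' := (hφj _ _).1 h1
          dsimp only at h2 h3
          subst h1' h2 h3
          have hi : i' = i := by
            by_contra hne'
            apply hne
            have hBool : ∀ i j i' : Bool, i ≠ j → i' ≠ i → i' = j := by decide
            rw [hBool i j i' hij hne']
          subst hi
          exact hA
        rintro (_ | ⟨i, c⟩ | ⟨i, c⟩) (_ | ⟨i', c'⟩ | ⟨i', c'⟩) hcd hne
        · exact absurd rfl hcd.2.1
        · exact absurd rfl hcd.2.1
        · exact absurd rfl hcd.2.1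
        · exact absurd rfl hcd.2.2
        · refine ⟨fun h => hcd.1 ?_, hRnear _ _⟩
          have h' := Prod.ext_iff.1 h
          rw [hRinj h'.1, show c = c' from h'.2]
        · exact hcross _ _ _ _ hne
        · exact absurd rfl hcd.2.2
        · exact (hcross _ _ _ _ (by rwa [Sym2.eq_swap])).symm
        · refine ⟨fun h => hcd.1 ?_, hSnear _ _⟩
          have h' := Prod.ext_iff.1 h
          rw [hSinj h'.1, show c = c' from h'.2]
    have key : ∀ (x : R) (y : S) (c d : Fin 3),
        (ladder P φ ψ fun x y => A x y ∨ (A (x + 1) (y + 1) ∨ A (x - 1) (y - 1))).Adj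
          (.inl (x, c)) (.inr (.inl (y, d))) →
        (bootStep (core ((Bool × Fin 3) ⊕ (Bool × Fin 3))) (ladder P φ ψ A)).Adj
          (.inl (x, c)) (.inr (.inl (y, d))) := by
      intro x y c d h
      by_cases hn : (ladder P φ ψ A).Adj (.inl (x, c)) (.inr (.inl (y, d)))
      · exact (bootStep_adj _ _ _ _).2 (Or.inl hn)
      have hcon : φ x = ψ y ∧ c = 0 ∧ d = 0 ∧ ¬ A x y := by
        by_contra hcon
        refine hn ⟨h.1, fun h1 h2 h3 => ?_⟩
        by_contra hA
        exact hcon ⟨h1, h2, h3, hA⟩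
      obtain ⟨hφ, rfl, rfl, hnA⟩ := hcon
      rcases h.2 hφ rfl rfl with hA | hA | hA
      · exact absurd hA hnA
      · simpa using main x y true false (by simp) hφ (by simpa using hA) (by simpa using hnA)
      · simpa using main (x - 1) (y - 1) false true (by simp) (by simp [hφ]) (by simpa using hA)
          (by simpa using hnA)
    rintro (u | u | u) (v | v | v) h
    all_goals first
      | exact key _ _ _ _ h
      | exact (key _ _ _ _ h.symm).symm
      | exact (bootStep_adj _ _ _ _).2 (Or.inl h)

end ladder

/-! ### Running time of the ladder -/

theorem bootProcess_comap {α α' β β' : Type*} [Finite β] (H : SimpleGraph α) (G : SimpleGraph β)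
    (e : β' ≃ β) (k : α' ≃ α) (s : ℕ) :
    bootProcess (H.comap k) (G.comap e) s = (bootProcess H G s).comap e := by
  induction s with
  | zero => rfl
  | succ s ih => rw [bootProcess, ih, bootStep_comap, bootProcess]

/-- The positions on the diagonal of the torus `R × S` at distance at most `s` from the origin. -/
def cells (R S : Type*) [CommRing R] [CommRing S] (s : ℕ) (x : R) (y : S) : Prop :=
  ∃ t : ℤ, |t| ≤ s ∧ x = t ∧ y = t

theorem cells_succ {R S : Type*} [CommRing R] [CommRing S] (s : ℕ) :
    (fun (x : R) (y : S) => cells R S s x y ∨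
      (cells R S s (x + 1) (y + 1) ∨ cells R S s (x - 1) (y - 1))) = cells R S (s + 1) := by
  funext x y
  apply propext
  constructor
  · rintro (⟨t, h, hx, hy⟩ | ⟨t, h, hx, hy⟩ | ⟨t, h, hx, hy⟩) <;> rw [abs_le] at h
    · exact ⟨t, by rw [abs_le]; push_cast; omega, hx, hy⟩
    · refine ⟨t - 1, by rw [abs_le]; push_cast; omega, ?_, ?_⟩ <;> push_cast
      · rw [← hx]; ring
      · rw [← hy]; ring
    · refine ⟨t + 1, by rw [abs_le]; push_cast; omega, ?_, ?_⟩ <;> push_cast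
      · rw [← hx]; ring
      · rw [← hy]; ring
  · rintro ⟨t, h, rfl, rfl⟩
    rw [abs_le] at h
    push_cast at h
    by_cases h1 : t = s + 1
    · refine Or.inr (Or.inr ⟨t - 1, by rw [abs_le]; omega, by push_cast; rfl, by push_cast; rfl⟩)
    · by_cases h2 : t = -(s + 1)
      · refine Or.inr (Or.inl ⟨t + 1, by rw [abs_le]; omega, by push_cast; rfl,
          by push_cast; rfl⟩)
      · exact Or.inl ⟨t, by rw [abs_le]; omega, rfl, rfl⟩

theorem bootProcess_host (t : ℕ) {R S P : Type*} [CommRing R] [CommRing S] [Finite R] [Finite S]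
    [Finite P] (φ : R →+* ZMod 4) (ψ : S →+* ZMod 4) (s : ℕ) :
    bootProcess (gad t (core ((Bool × Fin 3) ⊕ (Bool × Fin 3))))
      (gad t (ladder P φ ψ (cells R S 0))) s = gad t (ladder P φ ψ (cells R S s)) := by
  induction s with
  | zero => rfl
  | succ s ih =>
    rw [bootProcess, ih, bootStep_gad _ _ ladder_cliqueFree, bootStep_ladder, cells_succ]

/-- As `lcm (4 a) (4 (a + 1)) = 4 a (a + 1)`, the two ends of the active segment of the diagonal
do not meet before time about `2 a (a + 1)`. -/
theorem cells_not (a s : ℕ) (hs : s < 2 * (a * (a + 1))) :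
    ¬ cells (ZMod (4 * a)) (ZMod (4 * (a + 1))) s ((s + 1 : ℤ) : ZMod (4 * a))
      ((s + 1 : ℤ) : ZMod (4 * (a + 1))) := by
  rintro ⟨t, ht, h1, h2⟩
  rw [abs_le] at ht
  rw [ZMod.intCast_eq_intCast_iff_dvd_sub] at h1 h2
  have h1' : ((4 * a : ℕ) : ℤ) ∣ (s + 1 : ℤ) - t := (dvd_sub_comm).1 h1
  have h2' : ((4 * (a + 1) : ℕ) : ℤ) ∣ (s + 1 : ℤ) - t := (dvd_sub_comm).1 h2
  obtain ⟨d, hd⟩ : ∃ d : ℤ, (s + 1 : ℤ) - t = 4 * d :=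
    (dvd_trans ⟨(a : ℤ), by push_cast; ring⟩ h1' : (4 : ℤ) ∣ _)
  rw [hd] at h1' h2'
  push_cast at h1' h2'
  have h3 := (mul_dvd_mul_iff_left (by norm_num : (4 : ℤ) ≠ 0)).1 h1'
  have h4 := (mul_dvd_mul_iff_left (by norm_num : (4 : ℤ) ≠ 0)).1 h2'
  have hcop : IsCoprime (a : ℤ) (a + 1 : ℤ) := ⟨-1, 1, by ring⟩
  have h5 := Int.le_of_dvd (by omega) (hcop.mul_dvd h3 h4)
  have hs' : (s : ℤ) < 2 * (a * (a + 1)) := by exact_mod_cast hs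
  linarith

theorem host_ne (t : ℕ) {R S P : Type*} [CommRing R] [CommRing S] (φ : R →+* ZMod 4)
    (ψ : S →+* ZMod 4) (s : ℕ) (h : ¬ cells R S s ((s + 1 : ℤ) : R) ((s + 1 : ℤ) : S)) :
    gad t (ladder P φ ψ (cells R S s)) ≠ gad t (ladder P φ ψ (cells R S (s + 1))) := by
  intro he
  have hφ : φ ((s + 1 : ℤ) : R) = ψ ((s + 1 : ℤ) : S) := by rw [map_intCast, map_intCast]
  have h1 : (gad t (ladder P φ ψ (cells R S (s + 1)))).Adj
      (.inr (.inl (((s + 1 : ℤ) : R), 0))) (.inr (.inr (.inl (((s + 1 : ℤ) : S), 0)))) := by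
    refine ⟨?_, fun _ _ _ => ⟨s + 1, ?_, rfl, rfl⟩⟩
    · rw [hφ, sub_self]
      decide
    · rw [abs_of_nonneg (by positivity)]
      push_cast
      rfl
  rw [← he] at h1
  exact h (h1.2 hφ rfl rfl)

/-- The torus has about `n / 24` blocks on each side; what is left of the `n` vertices is padded by
isolated vertices of the ladder. -/
theorem exists_slow (t n : ℕ) (hn : 4 * (t + 49) ≤ n) {k : ℕ}
    (e : Fin k ≃ (Fin t ⊕ Fin 14) ⊕ Option ((Bool × Fin 3) ⊕ (Bool × Fin 3))) :
    (1 / 1000 : ℝ) * (n : ℝ) ^ 2 ≤ (maxRunningTime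
      ((gad t (core ((Bool × Fin 3) ⊕ (Bool × Fin 3)))).comap e) n : ℝ) := by
  obtain ⟨a, ha⟩ : ∃ a, a = (n - t - 26) / 24 := ⟨_, rfl⟩
  obtain ⟨r, hr⟩ : ∃ r, n = t + 26 + 24 * a + r := ⟨n - (t + 26 + 24 * a), by omega⟩
  have hna : n ≤ 32 * a := by omega
  have : NeZero (4 * a) := ⟨by omega⟩
  have : NeZero (4 * (a + 1)) := ⟨by omega⟩
  let φ : ZMod (4 * a) →+* ZMod 4 := ZMod.castHom (Dvd.intro _ rfl) _
  let ψ : ZMod (4 * (a + 1)) →+* ZMod 4 := ZMod.castHom (Dvd.intro _ rfl) _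
  let b : Fin n ≃ (Fin t ⊕ Fin 14) ⊕
      ((ZMod (4 * a) × Fin 3) ⊕ ((ZMod (4 * (a + 1)) × Fin 3) ⊕ Fin r)) :=
    (Fintype.equivFinOfCardEq (by simp [ZMod.card]; omega)).symm
  have hT : 2 * (a * (a + 1)) ≤ maxRunningTime
      ((gad t (core ((Bool × Fin 3) ⊕ (Bool × Fin 3)))).comap e) n := by
    refine le_trans (le_runningTime _
      ((gad t (ladder (Fin r) φ ψ (cells _ _ 0))).comap b) _ fun s hs he => ?_)
      (runningTime_le_max _ _)
    rw [bootProcess_comap, bootProcess_comap, bootProcess_host, bootProcess_host] at he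
    refine host_ne t (P := Fin r) φ ψ s (cells_not a s hs) ?_
    ext u v
    have := congrArg (fun G : SimpleGraph (Fin n) => G.Adj (b.symm u) (b.symm v)) he
    simpa using this
  have hT' : (2 * (a * (a + 1)) : ℝ) ≤ (maxRunningTime
      ((gad t (core ((Bool × Fin 3) ⊕ (Bool × Fin 3)))).comap e) n : ℝ) := by exact_mod_cast hT
  have hna' : (n : ℝ) ≤ 32 * a := by exact_mod_cast hna
  have h0 : (0 : ℝ) ≤ n := n.cast_nonneg
  have h1 : (0 : ℝ) ≤ a := a.cast_nonneg
  nlinarith [mul_le_mul hna' hna' h0 (by positivity)]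

/-! ### Connectedness and minimum degree -/

theorem ncard_neighborSet_comap {α α' : Type*} (H : SimpleGraph α) (k : α' ≃ α) (v : α') :
    ((H.comap k).neighborSet v).ncard = (H.neighborSet (k v)).ncard := by
  rw [← Set.ncard_image_of_injective _ k.injective]
  congr 1
  ext x
  constructor
  · rintro ⟨y, hy, rfl⟩
    exact hy
  · exact fun h => ⟨k.symm x, by simpa using h, by simp⟩

theorem gad_connected {t : ℕ} (ht : 1 ≤ t) {γ : Type*} (A : SimpleGraph γ) :
    (gad t A).Connected := by
  rw [connected_iff_exists_forall_reachable]
  refine ⟨.inl (.inl ⟨0, ht⟩), ?_⟩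
  rintro (k | x)
  · by_cases h : .inl ⟨0, ht⟩ = k
    · rw [h]
    · exact Adj.reachable h
  · exact Adj.reachable gad_hr

theorem gad_degree {t : ℕ} {γ : Type*} [Finite γ] (A : SimpleGraph γ)
    (v : (Fin t ⊕ Fin 14) ⊕ γ) : t ≤ ((gad t A).neighborSet v).ncard := by
  classical
  -- all hubs are neighbours, except that a hub trades itself for a vertex of the big clique
  let f : Fin t → (Fin t ⊕ Fin 14) ⊕ γ := fun i =>
    if v = .inl (.inl i) then .inl (.inr 0) else .inl (.inl i)
  have hf : Function.Injective f := by
    intro i j hij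
    by_cases hi : v = .inl (.inl i) <;> by_cases hj : v = .inl (.inl j)
    · simpa using hi.symm.trans hj
    · simp [f, hi] at hij
      by_contra hne
      simp [hne] at hij
    · simp [f, hj] at hij
      by_contra hne
      simp [Ne.symm hne] at hij
    · simpa [f, hi, hj] using hij
  have hr : Set.range f ⊆ (gad t A).neighborSet v := by
    rintro _ ⟨i, rfl⟩
    by_cases hi : v = .inl (.inl i)
    · simp [f, hi]
    · simp only [f, hi, if_false, mem_neighborSet]
      rcases v with k | x
      · exact fun h => hi (by rw [h])
      · trivial
  have := Set.ncard_le_ncard hr (Set.toFinite _)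
  rwa [← Set.image_univ, Set.ncard_image_of_injective _ hf, Set.ncard_univ, Nat.card_eq_fintype_card,
    Fintype.card_fin] at this

theorem gad_degree_none (t : ℕ) (C : Type*) :
    ((gad t (core C)).neighborSet (.inr none)).ncard = t := by
  have : (gad t (core C)).neighborSet (.inr none) = Set.range fun i => .inl (.inl i) := by
    ext v
    rcases v with (i | i) | x
    · simp
    · simp
    · simp [core]
  rw [this, ← Set.image_univ, Set.ncard_image_of_injective _
    (fun i j h => by simpa using h), Set.ncard_univ, Nat.card_eq_fintype_card,
    Fintype.card_fin]

/-- For each `t ≥ 1` there is a connected graph `H` with minimum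
degree exactly `t` and `M_H(n) = Ω(n²)`. -/
theorem exists_graph_minDegree_quadratic (t : ℕ) (ht : 1 ≤ t) :
    ∃ (k : ℕ) (H : SimpleGraph (Fin k)), H.Connected ∧
      (∀ v, t ≤ (H.neighborSet v).ncard) ∧ (∃ v, (H.neighborSet v).ncard = t) ∧
      ∃ c : ℝ, 0 < c ∧ ∃ n₀ : ℕ, ∀ n : ℕ, n₀ ≤ n →
        c * (n : ℝ) ^ 2 ≤ (maxRunningTime H n : ℝ) := by
  let e := (Fintype.equivFin
    ((Fin t ⊕ Fin 14) ⊕ Option ((Bool × Fin 3) ⊕ (Bool × Fin 3)))).symm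
  refine ⟨_, (gad t (core ((Bool × Fin 3) ⊕ (Bool × Fin 3)))).comap e,
    (Iso.comap e _).connected_iff.2 (gad_connected ht _), fun v => ?_, ⟨e.symm (.inr none), ?_⟩,
    1 / 1000, by norm_num, 4 * (t + 49), fun n hn => exists_slow t n hn e⟩
  · rw [ncard_neighborSet_comap]
    exact gad_degree _ _
  · rw [ncard_neighborSet_comap, e.apply_symm_apply]
    exact gad_degree_none _ _
end

section
/- Let H be a graph with at least one edge such that there exists an edge e ∈ E(H) with vertex connectivity κ(H−e) ≤ 2 and such that the final graph of the H-bootstrap process on H itself is the complete graph K_{v(H)}. Then there exists a constant C > 0 such that M_H(n) ≤ C·n for all n ∈ ℕ. -/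
/-!
Write `c` for the running time of the `H`-process on `H` itself and `k` for `v(H)`. Once a copy
of `H` is present, its vertex set is a clique `c` steps later (`clique_of_copy`), because the
process is functorial for injective homomorphisms (`bootProcess_map`).

The connectivity hypothesis makes large cliques merge. `H` has an edge `ab` such that at most two
vertices separate `a` from `b` in `H - ab` (`exists_splits`). If the given edge `e` crosses the
separation of `H - e`, take `ab = e`. Otherwise `H` lies in the union `K` of two cliques, one on
each side of the separation, both including the separator; as `H` percolates, so does `K`, and
the first edge added to `K` crosses, so the copy of `H` it completes provides `ab`. Consequently
two cliques with at least `k` vertices each and two common vertices become one clique in a single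
step (`merge`): for `p` and `q` outside the overlap, map `ab` to `pq`, the separator into the
overlap and the rest greedily.

Finally, a copy of `H` completed in step `t + 2` uses an edge added in step `t + 1`
(`BornAt.exists_prev`). Tracing the last added edge back gives a sequence of copies, consecutive
ones sharing two vertices, whose partial unions `U i` are cliques after step `i + c + 2`
(`exists_chain`). An edge added in step `i + c + 3` is contained in `U (i + c + 2)` but cannot lie
inside `U i`, so the union gains a vertex at least every `c + 2` steps, and the running time on
`n` vertices is at most `(c + 2) * n` (`runningTime_le`).
-/

open SimpleGraph

/-- `κ(G) ≤ k`: either `G` has at most `k+1` vertices, or some set of at most `k`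
vertices disconnects `G`. -/
def VertexConnLE {V : Type*} [Fintype V] (G : SimpleGraph V) (k : ℕ) : Prop :=
  Fintype.card V ≤ k + 1 ∨
    ∃ S : Set V, S.ncard ≤ k ∧ ¬ (G.induce Sᶜ).Connected


/-! ### One step of the process in terms of embeddings -/

/-- The injective map `φ : V → β` is a copy of `H` in `G + uv` that uses the pair `uv`. -/
def Creates {V β : Type*} (H : SimpleGraph V) (G : SimpleGraph β) (u v : β) (φ : V → β) : Prop :=
  Function.Injective φ ∧ (∀ x y, H.Adj x y → G.Adj (φ x) (φ y) ∨ s(φ x, φ y) = s(u, v)) ∧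
    ∃ x y, H.Adj x y ∧ s(φ x, φ y) = s(u, v)

lemma Creates.ne {V β : Type*} {H : SimpleGraph V} {G : SimpleGraph β} {u v : β} {φ : V → β}
    (h : Creates H G u v φ) : u ≠ v := by
  obtain ⟨hi, -, x, y, hxy, he⟩ := h
  rintro rfl
  have : φ x = φ y := by grind
  exact hxy.ne (hi this)

lemma Creates.symm {V β : Type*} {H : SimpleGraph V} {G : SimpleGraph β} {u v : β} {φ : V → β}
    (h : Creates H G u v φ) : Creates H G v u φ := by
  unfold Creates at *
  rwa [Sym2.eq_swap (a := v)]

/-- Copies of `H` in `G` are also copies in `G + uv`, so the count increases exactly when some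
copy in `G + uv` uses the pair `uv`. -/
lemma numCopies_lt_iff_s6 {V β : Type*} [Finite β] (H : SimpleGraph V) (G : SimpleGraph β)
    {u v : β} (hG : ¬ G.Adj u v) :
    numCopies H G < numCopies H (G ⊔ SimpleGraph.fromEdgeSet {s(u, v)}) ↔
      ∃ φ, Creates H G u v φ := by
  set G' := G ⊔ SimpleGraph.fromEdgeSet {s(u, v)} with hG'
  have hle : G ≤ G' := le_sup_left
  -- a subgraph of `G` viewed as a subgraph of `G + uv`
  let f : G.Subgraph → G'.Subgraph := fun K =>
    { verts := K.verts
      Adj := K.Adj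
      adj_sub := fun h => hle (K.adj_sub h)
      edge_vert := fun h => K.edge_vert h
      symm := K.symm }
  have hf : Function.Injective f := by
    intro K L h
    ext1
    · exact congrArg (·.verts) h
    · exact congrArg (·.Adj) h
  have himg : f '' {K : G.Subgraph | Nonempty (K.coe ≃g H)} ⊆
      {K : G'.Subgraph | Nonempty (K.coe ≃g H)} := by
    rintro _ ⟨K, hK, rfl⟩
    exact hK
  have hcard : numCopies H G = (f '' {K : G.Subgraph | Nonempty (K.coe ≃g H)}).ncard :=
    (Set.ncard_image_of_injective _ hf).symm
  have hfin : Finite G'.Subgraph := inferInstance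
  constructor
  · intro hlt
    have : ∃ K ∈ {K : G'.Subgraph | Nonempty (K.coe ≃g H)},
        K ∉ f '' {K : G.Subgraph | Nonempty (K.coe ≃g H)} := by
      by_contra! hcon
      rw [hcard] at hlt
      exact absurd (Set.ncard_le_ncard hcon (Set.toFinite _)) (not_le.mpr hlt)
    obtain ⟨K, ⟨i⟩, hK⟩ := this
    -- a copy avoiding `uv` would already be a subgraph of `G`
    have huv : K.Adj u v := by
      by_contra hn
      refine hK ⟨⟨K.verts, K.Adj, fun {x y} h => ?_, fun h => K.edge_vert h, K.symm⟩, ⟨i⟩, rfl⟩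
      have h1 := K.adj_sub h
      simp only [hG', sup_adj, fromEdgeSet_adj, Set.mem_singleton_iff] at h1
      rcases h1 with h1 | ⟨h1, -⟩
      · exact h1
      · rcases Sym2.eq_iff.mp h1 with ⟨rfl, rfl⟩ | ⟨rfl, rfl⟩
        · exact absurd h hn
        · exact absurd h.symm hn
    refine ⟨fun x => (i.symm x : β), fun x y h => i.symm.injective (Subtype.ext h), ?_, ?_⟩
    · intro x y hxy
      have h1 : K.coe.Adj (i.symm x) (i.symm y) := i.symm.map_adj_iff.mpr hxy
      have h2 := K.adj_sub h1
      simp only [hG', sup_adj, fromEdgeSet_adj, Set.mem_singleton_iff] at h2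
      tauto
    · refine ⟨i ⟨u, K.edge_vert huv⟩, i ⟨v, K.edge_vert huv.symm⟩, ?_, by simp⟩
      exact i.map_adj_iff.mpr huv
  · rintro ⟨φ, hi, hadj, x, y, hxy, he⟩
    have hhom : ∀ {x y}, H.Adj x y → G'.Adj (φ x) (φ y) := by
      intro x y h
      rcases hadj x y h with h1 | h1
      · exact hle h1
      · simp only [hG', sup_adj, fromEdgeSet_adj, Set.mem_singleton_iff]
        exact Or.inr ⟨h1, fun h2 => h.ne (hi h2)⟩
    let K : G'.Subgraph :=
      { verts := Set.range φ
        Adj := fun p q => ∃ x y, H.Adj x y ∧ φ x = p ∧ φ y = q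
        adj_sub := by rintro _ _ ⟨x, y, h, rfl, rfl⟩; exact hhom h
        edge_vert := by rintro _ _ ⟨x, y, h, rfl, rfl⟩; exact ⟨x, rfl⟩
        symm := ⟨by rintro _ _ ⟨x, y, h, rfl, rfl⟩; exact ⟨y, x, h.symm, rfl, rfl⟩⟩ }
    have hKiso : Nonempty (K.coe ≃g H) := by
      refine ⟨RelIso.symm ⟨Equiv.ofInjective φ hi, ?_⟩⟩
      intro p q
      simp only [Subgraph.coe_adj]
      constructor
      · rintro ⟨x, y, h, h1, h2⟩
        rwa [← hi h1, ← hi h2]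
      · intro h
        exact ⟨p, q, h, rfl, rfl⟩
    rw [hcard]
    refine Set.ncard_lt_ncard (Set.ssubset_iff_subset_ne.mpr ⟨himg, fun heq => ?_⟩)
      (Set.toFinite _)
    have : K ∈ f '' {K : G.Subgraph | Nonempty (K.coe ≃g H)} := heq ▸ hKiso
    obtain ⟨L, -, hL⟩ := this
    have h1 : L.Adj (φ x) (φ y) := by
      have : (f L).Adj (φ x) (φ y) := by rw [hL]; exact ⟨x, y, hxy, rfl, rfl⟩
      exact this
    have h2 := L.adj_sub h1
    rcases Sym2.eq_iff.mp he with ⟨h3, h4⟩ | ⟨h3, h4⟩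
    · rw [h3, h4] at h2; exact hG h2
    · rw [h3, h4] at h2; exact hG h2.symm

lemma bootStep_adj_s6 {V β : Type*} [Finite β] (H : SimpleGraph V) (G : SimpleGraph β) (u v : β) :
    (bootStep H G).Adj u v ↔ G.Adj u v ∨ ∃ φ, Creates H G u v φ := by
  by_cases hG : G.Adj u v
  · simp [bootStep, hG]
  · have hG2 : ¬ G.Adj v u := fun h => hG h.symm
    simp only [bootStep, sup_adj, fromRel_adj, hG, false_or, numCopies_lt_iff_s6 H G hG,
      numCopies_lt_iff_s6 H G hG2]
    constructor
    · rintro ⟨-, ⟨φ, h⟩ | ⟨φ, h⟩⟩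
      · exact ⟨φ, h⟩
      · exact ⟨φ, h.symm⟩
    · rintro ⟨φ, h⟩
      exact ⟨h.ne, Or.inl ⟨φ, h⟩⟩

/-! ### Functoriality and percolation of copies -/

lemma bootProcess_mono {V β : Type*} (H : SimpleGraph V) (G : SimpleGraph β) :
    Monotone (bootProcess H G) :=
  monotone_nat_of_le_succ fun _ => le_sup_left

/-- The process is functorial for injective homomorphisms. -/
lemma bootProcess_map {V α β : Type*} [Finite α] [Finite β] (H : SimpleGraph V)
    {G : SimpleGraph α} {G' : SimpleGraph β} {ψ : α → β} (hψ : Function.Injective ψ)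
    (hom : ∀ x y, G.Adj x y → G'.Adj (ψ x) (ψ y)) (i : ℕ) :
    ∀ x y, (bootProcess H G i).Adj x y → (bootProcess H G' i).Adj (ψ x) (ψ y) := by
  induction i with
  | zero => exact hom
  | succ i ih =>
    intro x y h
    rw [bootProcess, bootStep_adj_s6] at h ⊢
    rcases h with h | ⟨φ, hi, hadj, p, q, hpq, he⟩
    · exact Or.inl (ih x y h)
    · have hmap : ∀ p q, s(φ p, φ q) = s(x, y) → s(ψ (φ p), ψ (φ q)) = s(ψ x, ψ y) :=
        fun p q h => by simpa using congrArg (Sym2.map ψ) h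
      exact Or.inr ⟨ψ ∘ φ, hψ.comp hi, fun p q hpq => (hadj p q hpq).imp (ih _ _) (hmap p q),
        p, q, hpq, hmap p q he⟩

lemma bootProcess_add {V β : Type*} (H : SimpleGraph V) (G : SimpleGraph β) (i j : ℕ) :
    bootProcess H (bootProcess H G i) j = bootProcess H G (i + j) := by
  induction j with
  | zero => rfl
  | succ j ih => rw [bootProcess, ih]; rfl

/-- A copy of `H` present at time `i` spans a clique `c` steps later, if `H` itself
percolates in `c` steps. -/
lemma clique_of_copy {V β : Type*} [Finite V] [Finite β] {H : SimpleGraph V} {G : SimpleGraph β}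
    {c i : ℕ} (hc : bootProcess H H c = ⊤) {φ : V → β} (hφ : Function.Injective φ)
    (hom : ∀ x y, H.Adj x y → (bootProcess H G i).Adj (φ x) (φ y)) :
    (bootProcess H G (i + c)).IsClique (Set.range φ) := by
  rintro _ ⟨x, rfl⟩ _ ⟨y, rfl⟩ hne
  rw [← bootProcess_add]
  refine bootProcess_map H hφ hom c x y ?_
  rw [hc]
  exact fun h => hne (congrArg φ h)

/-! ### Separating the ends of an edge by two vertices -/

/-- `H` minus the edge `ab` is covered by two vertex sets `A ∋ a` and `B ∋ b` (membership follows
from `A ∪ B` being everything, `a ∉ B` and `b ∉ A`) that overlap in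
at most two vertices, neither `a` nor `b` among them, with no edge of `H - ab` between
`A \ B` and `B \ A`. -/
def Splits {V : Type*} (H : SimpleGraph V) (a b : V) (A B : Set V) : Prop :=
  H.Adj a b ∧ A ∪ B = Set.univ ∧ (A ∩ B).ncard ≤ 2 ∧ a ∉ B ∧ b ∉ A ∧
    ∀ u v, H.Adj u v → s(u, v) ≠ s(a, b) → (u ∈ A ∧ v ∈ A) ∨ (u ∈ B ∧ v ∈ B)

/-- If `H` itself has a separation of order at most two, then percolation of `H` forces an edge
across the union of the two cliques on the sides; the copy of `H` it completes, pulled back,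
splits `H`. -/
lemma exists_splits_of_cover {V : Type*} [Finite V] {H : SimpleGraph V} {c : ℕ}
    (hc : bootProcess H H c = ⊤) {A B : Set V} (hAB : A ∪ B = Set.univ)
    (hcard : (A ∩ B).ncard ≤ 2) {x y : V} (hx : x ∉ B) (hy : y ∉ A)
    (hcov : ∀ u v, H.Adj u v → (u ∈ A ∧ v ∈ A) ∨ (u ∈ B ∧ v ∈ B)) :
    ∃ a b A B, Splits H a b A B := by
  -- the union of the two cliques on `A` and `B`
  let G : SimpleGraph V := SimpleGraph.fromRel fun u v => (u ∈ A ∧ v ∈ A) ∨ (u ∈ B ∧ v ∈ B)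
  have hGadj : ∀ u v, G.Adj u v ↔ u ≠ v ∧ ((u ∈ A ∧ v ∈ A) ∨ (u ∈ B ∧ v ∈ B)) := by
    intro u v
    simp only [G, fromRel_adj]
    tauto
  have hstep : bootStep H G ≠ G := by
    intro hfix
    have hconst : ∀ i, bootProcess H G i = G := by
      intro i
      induction i with
      | zero => rfl
      | succ i ih => rw [bootProcess, ih, hfix]
    have hxy : x ≠ y := by
      rintro rfl
      have : x ∈ A ∪ B := hAB ▸ Set.mem_univ x
      exact this.elim hy hx
    have h1 := bootProcess_map H (G := H) (G' := G) (ψ := id) Function.injective_id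
      (fun u v h => (hGadj u v).mpr ⟨h.ne, hcov u v h⟩) c x y (by rw [hc]; exact hxy)
    rw [hconst, id, id, hGadj] at h1
    tauto
  have hle : G ≤ bootStep H G := le_sup_left
  obtain ⟨p, q, hpq, hnpq⟩ : ∃ p q, (bootStep H G).Adj p q ∧ ¬ G.Adj p q := by
    by_contra! hcon
    exact hstep (le_antisymm (fun p q => hcon p q) hle)
  rw [bootStep_adj_s6] at hpq
  obtain ⟨φ, hφ⟩ := hpq.resolve_left hnpq
  have hcross : ∀ p q, p ≠ q → ¬ G.Adj p q → (p ∉ B ∧ q ∉ A) ∨ (p ∉ A ∧ q ∉ B) := by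
    intro p q hne h
    rw [hGadj] at h
    have h1 : p ∈ A ∪ B := hAB ▸ Set.mem_univ p
    have h2 : q ∈ A ∪ B := hAB ▸ Set.mem_univ q
    rw [Set.mem_union] at h1 h2
    tauto
  -- orient the new edge from `A` to `B`
  obtain ⟨p, q, hφ, hp, hq⟩ : ∃ p q, Creates H G p q φ ∧ p ∉ B ∧ q ∉ A := by
    rcases hcross p q hφ.ne hnpq with h | h
    · exact ⟨p, q, hφ, h⟩
    · exact ⟨q, p, hφ.symm, h.2, h.1⟩
  obtain ⟨hi, hadj, a, b, hab, he⟩ := hφ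
  obtain ⟨a, b, hab, rfl, rfl⟩ : ∃ a b, H.Adj a b ∧ φ a = p ∧ φ b = q := by
    rcases Sym2.eq_iff.mp he with ⟨h1, h2⟩ | ⟨h1, h2⟩
    · exact ⟨a, b, hab, h1, h2⟩
    · exact ⟨b, a, hab.symm, h2, h1⟩
  refine ⟨a, b, φ ⁻¹' A, φ ⁻¹' B, hab, ?_, ?_, hp, hq, ?_⟩
  · rw [← Set.preimage_union, hAB, Set.preimage_univ]
  · rw [← Set.preimage_inter]
    refine le_trans ?_ hcard
    rw [← Set.ncard_image_of_injective _ hi]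
    exact Set.ncard_le_ncard (Set.image_preimage_subset _ _) (Set.toFinite _)
  · intro u v huv hne
    rcases hadj u v huv with h | h
    · exact ((hGadj _ _).mp h).2
    · refine absurd ?_ hne
      apply Sym2.map.injective hi
      simpa using h

/-- The connectivity hypothesis provides a splitting, possibly along an edge other than `e`. -/
lemma exists_splits {V : Type*} [Fintype V] {H : SimpleGraph V} {e : Sym2 V} (he : e ∈ H.edgeSet)
    (hκ : VertexConnLE (H.deleteEdges {e}) 2) {c : ℕ} (hc : bootProcess H H c = ⊤) :
    ∃ a b A B, Splits H a b A B := by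
  classical
  induction e with | _ a b
  rw [mem_edgeSet] at he
  -- with at most three vertices, those other than `a` and `b` can serve as the overlap
  by_cases hV : Fintype.card V ≤ 3
  · refine ⟨a, b, {b}ᶜ, {a}ᶜ, he, ?_, ?_, by simp, by simp, ?_⟩
    · ext x
      have := he.ne
      simp only [Set.mem_union, Set.mem_compl_iff, Set.mem_singleton_iff, Set.mem_univ, iff_true]
      grind
    · have h1 : (({b}ᶜ ∩ {a}ᶜ : Set V)) = ({b, a} : Set V)ᶜ := by
        ext; simp
      rw [h1, Set.ncard_compl, Set.ncard_pair he.ne.symm, Nat.card_eq_fintype_card]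
      omega
    · intro u v huv hne
      have := huv.ne
      have := he.ne
      simp only [Set.mem_compl_iff, Set.mem_singleton_iff]
      rw [Ne, Sym2.eq_iff] at hne
      grind
  obtain ⟨S, hS, hconn⟩ := hκ.resolve_left hV
  have hne : Nonempty (Sᶜ : Set V) := by
    by_contra h
    have h1 : S = Set.univ := by
      rw [Set.not_nonempty_iff_eq_empty', Set.compl_empty_iff] at h
      exact h
    rw [h1, Set.ncard_univ, Nat.card_eq_fintype_card] at hS
    omega
  have hpre : ¬ ((H.deleteEdges {s(a, b)}).induce Sᶜ).Preconnected := fun h => hconn ⟨h⟩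
  simp only [Preconnected, not_forall] at hpre
  obtain ⟨x, y, hxy⟩ := hpre
  set K := (H.deleteEdges {s(a, b)}).induce Sᶜ with hK
  -- `R` is the component of `x` in `H - e - S`
  let R : Set V := {v | ∃ h : v ∈ Sᶜ, K.Reachable x ⟨v, h⟩}
  have hRS : ∀ v ∈ R, v ∉ S := fun v hv => hv.1
  have hstep : ∀ u v, u ∈ R → H.Adj u v → s(u, v) ≠ s(a, b) → v ∈ R ∪ S := by
    rintro u v ⟨hu, hr⟩ huv hne
    by_cases hv : v ∈ S
    · exact Or.inr hv
    · refine Or.inl ⟨hv, hr.trans (Adj.reachable ?_)⟩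
      simp [hK, huv, hne]
  have hcov : ∀ u v, H.Adj u v → s(u, v) ≠ s(a, b) →
      (u ∈ R ∪ S ∧ v ∈ R ∪ S) ∨ (u ∈ Rᶜ ∧ v ∈ Rᶜ) := by
    intro u v huv hne
    by_cases hu : u ∈ R
    · exact Or.inl ⟨Or.inl hu, hstep u v hu huv hne⟩
    · by_cases hv : v ∈ R
      · exact Or.inl ⟨hstep v u hv huv.symm (by rwa [Sym2.eq_swap]), Or.inl hv⟩
      · exact Or.inr ⟨hu, hv⟩
  have hun : (R ∪ S) ∪ Rᶜ = Set.univ := by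
    ext v; simp only [Set.mem_union, Set.mem_compl_iff, Set.mem_univ, iff_true]; tauto
  have hint : ((R ∪ S) ∩ Rᶜ).ncard ≤ 2 := by
    refine le_trans (Set.ncard_le_ncard (t := S) ?_ (Set.toFinite _)) hS
    rintro v ⟨h1 | h1, h2⟩
    · exact absurd h1 h2
    · exact h1
  have hxB : (x : V) ∉ Rᶜ := fun h => h ⟨x.2, Reachable.refl _⟩
  have hyA : (y : V) ∉ R ∪ S := by
    rintro (⟨_, h⟩ | h)
    · exact hxy h
    · exact y.2 h
  -- either `e` respects the separation, which then separates `H`, or `e` crosses it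
  by_cases hab : (a ∈ R ∪ S ∧ b ∈ R ∪ S) ∨ (a ∈ Rᶜ ∧ b ∈ Rᶜ)
  · refine exists_splits_of_cover hc hun hint hxB hyA fun u v huv => ?_
    by_cases h : s(u, v) = s(a, b)
    · rcases Sym2.eq_iff.mp h with ⟨rfl, rfl⟩ | ⟨rfl, rfl⟩
      · exact hab
      · tauto
    · exact hcov u v huv h
  · by_cases ha : a ∈ R
    · exact ⟨a, b, R ∪ S, Rᶜ, he, hun, hint, by simpa using ha,
        fun hb => hab (Or.inl ⟨Or.inl ha, hb⟩), hcov⟩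
    · have hb : b ∈ R := by
        by_contra hb
        exact hab (Or.inr ⟨ha, hb⟩)
      exact ⟨b, a, R ∪ S, Rᶜ, he.symm, hun, hint, by simpa using hb,
        fun ha' => hab (Or.inl ⟨ha', Or.inl hb⟩),
        fun u v huv hne => hcov u v huv (by rwa [Sym2.eq_swap (a := a)])⟩

/-! ### Merging cliques -/

/-- Hall's condition yields an embedding of `V` into `P ∪ Q` that respects a
splitting `A`, `B` and sends `ab` to `pq`. -/
lemma exists_embedding {V β : Type*} [Fintype V] [DecidableEq β] {a b : V} {A B : Set V}
    (hab : a ≠ b) (hAB : A ∪ B = Set.univ) (hcard : (A ∩ B).ncard ≤ 2) (ha : a ∉ B) (hb : b ∉ A)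
    {P Q : Finset β} (hP : Fintype.card V ≤ P.card) (hQ : Fintype.card V ≤ Q.card)
    (hPQ : 2 ≤ (P ∩ Q).card) {p q : β} (hp : p ∈ P) (hpQ : p ∉ Q) (hq : q ∈ Q) (hqP : q ∉ P) :
    ∃ φ : V → β, Function.Injective φ ∧ φ a = p ∧ φ b = q ∧
      (∀ x ∈ A, φ x ∈ P) ∧ (∀ x ∈ B, φ x ∈ Q) := by
  classical
  -- `g` embeds the overlap of `A` and `B` into that of `P` and `Q`
  obtain ⟨g, hgm, hgi⟩ : ∃ g : V → β, (∀ x ∈ A ∩ B, g x ∈ P ∩ Q) ∧ Set.InjOn g (A ∩ B) := by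
    have h1 : ((A ∩ B).toFinset).card ≤ (P ∩ Q).card := by
      rw [← Set.ncard_eq_toFinset_card']
      omega
    obtain ⟨g⟩ : Nonempty (((A ∩ B).toFinset) ↪ (P ∩ Q : Finset β)) := by
      apply Function.Embedding.nonempty_of_card_le
      simpa only [Fintype.card_coe] using h1
    refine ⟨fun x => if h : x ∈ (A ∩ B).toFinset then g ⟨x, h⟩ else p, ?_, ?_⟩
    · intro x hx
      have hx' : x ∈ (A ∩ B).toFinset := Set.mem_toFinset.mpr hx
      simp only [hx', dif_pos]
      exact (g ⟨x, hx'⟩).2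
    · intro x hx y hy hxy
      have hx' : x ∈ (A ∩ B).toFinset := Set.mem_toFinset.mpr hx
      have hy' : y ∈ (A ∩ B).toFinset := Set.mem_toFinset.mpr hy
      simp only [hx', hy', dif_pos] at hxy
      have := g.injective (Subtype.ext hxy)
      simpa using this
  -- the admissible images of each vertex
  let t : V → Finset β := fun x =>
    if x = a then {p} else if x = b then {q} else
      if x ∈ A then (if x ∈ B then P ∩ Q else P) else Q
  have haA : a ∈ A := ((hAB ▸ Set.mem_univ a : a ∈ A ∪ B)).resolve_right ha
  have hbB : b ∈ B := ((hAB ▸ Set.mem_univ b : b ∈ A ∪ B)).resolve_left hb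
  have hBof : ∀ x, x ∉ A → x ∈ B := fun x h =>
    ((hAB ▸ Set.mem_univ x : x ∈ A ∪ B)).resolve_left h
  have hall : ∀ X : Finset V, X.card ≤ (X.biUnion t).card := by
    intro X
    -- one vertex with all of `P` or `Q` at its disposal already gives enough room for `V`
    by_cases hX : ∃ x ∈ X, P ⊆ t x ∨ Q ⊆ t x
    · obtain ⟨x, hx, h⟩ := hX
      have hsub := Finset.subset_biUnion_of_mem t hx
      have hXV := Finset.card_le_univ X
      rcases h with h | h
      · have := Finset.card_le_card (h.trans hsub); omega
      · have := Finset.card_le_card (h.trans hsub); omega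
    · push Not at hX
      have hX' : ∀ x ∈ X, x = a ∨ x = b ∨ (x ∈ A ∩ B) := by
        intro x hx
        by_contra! hcon
        obtain ⟨h1, h2, h3⟩ := hcon
        have h4 := hX x hx
        by_cases hA : x ∈ A
        · have hB : x ∉ B := fun h => h3 ⟨hA, h⟩
          exact h4.1 (by simp [t, h1, h2, hA, hB])
        · exact h4.2 (by simp [t, h1, h2, hA])
      -- otherwise only `a`, `b` and the overlap occur, and they are mapped injectively by `ψ`
      let ψ : V → β := fun x => if x = a then p else if x = b then q else g x
      refine Finset.card_le_card_of_injOn ψ ?_ ?_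
      · intro x hx
        rw [Finset.mem_coe, Finset.mem_biUnion]
        refine ⟨x, hx, ?_⟩
        rcases hX' x hx with rfl | rfl | h
        · simp [ψ, t]
        · simp [ψ, t, hab.symm]
        · have h1 : x ≠ a := by rintro rfl; exact ha h.2
          have h2 : x ≠ b := by rintro rfl; exact hb h.1
          simpa [ψ, t, h1, h2, h.1, h.2] using hgm x h
      · have key : ∀ x ∈ X, x ≠ a → x ≠ b → x ∈ A ∩ B ∧ g x ∈ P ∧ g x ∈ Q := by
          intro x hx h1 h2
          have h3 : x ∈ A ∩ B := by rcases hX' x hx with h | h | h <;> first | contradiction | exact h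
          exact ⟨h3, Finset.mem_inter.mp (hgm x h3)⟩
        intro x hx y hy hxy
        have kx := key x hx
        have ky := key y hy
        simp only [ψ] at hxy
        by_cases h1 : x = a <;> by_cases h2 : y = a <;> by_cases h3 : x = b <;>
          by_cases h4 : y = b <;> simp only [h1, h2, h3, h4, if_true, if_false] at hxy <;>
          first
            | (subst_vars; rfl)
            | exact hgi (kx h1 h3).1 (ky h2 h4).1 hxy
            | grind
  obtain ⟨φ, hφ, hmem⟩ := (Finset.all_card_le_biUnion_card_iff_exists_injective t).mp hall
  have hφa : φ a = p := by simpa [t] using hmem a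
  have hφb : φ b = q := by simpa [t, hab.symm] using hmem b
  refine ⟨φ, hφ, hφa, hφb, fun x hx => ?_, fun x hx => ?_⟩
  · by_cases h1 : x = a
    · rw [h1, hφa]; exact hp
    · have h2 : x ≠ b := by rintro rfl; exact hb hx
      have := hmem x
      simp only [t, h1, h2, hx, if_true, if_false] at this
      split_ifs at this
      · exact (Finset.mem_inter.mp this).1
      · exact this
  · by_cases h2 : x = b
    · rw [h2, hφb]; exact hq
    · have h1 : x ≠ a := by rintro rfl; exact ha hx
      have := hmem x
      simp only [t, h1, h2, hx, if_true, if_false] at this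
      split_ifs at this
      · exact (Finset.mem_inter.mp this).2
      · exact this

/-- Two large cliques sharing two vertices merge in a single step. -/
lemma merge {V β : Type*} [Fintype V] [Finite β] [DecidableEq β] {H : SimpleGraph V} {a b : V}
    {A B : Set V} (hs : Splits H a b A B) {G : SimpleGraph β} {P Q : Finset β}
    (hPc : G.IsClique P) (hQc : G.IsClique Q)
    (hP : Fintype.card V ≤ P.card) (hQ : Fintype.card V ≤ Q.card) (hPQ : 2 ≤ (P ∩ Q).card) :
    (bootStep H G).IsClique (P ∪ Q : Finset β) := by
  obtain ⟨hab, hAB, hcard, ha, hb, hcov⟩ := hs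
  have key : ∀ p q, p ∈ P → p ∉ Q → q ∈ Q → q ∉ P → (bootStep H G).Adj p q := by
    intro p q hp hpQ hq hqP
    obtain ⟨φ, hi, rfl, rfl, hA, hB⟩ :=
      exists_embedding hab.ne hAB hcard ha hb hP hQ hPQ hp hpQ hq hqP
    rw [bootStep_adj_s6]
    refine Or.inr ⟨φ, hi, fun x y hxy => ?_, a, b, hab, rfl⟩
    by_cases h : s(x, y) = s(a, b)
    · exact Or.inr (by simpa using congrArg (Sym2.map φ) h)
    · have hne : φ x ≠ φ y := fun h => hxy.ne (hi h)
      rcases hcov x y hxy h with h | h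
      · exact Or.inl (hPc (hA x h.1) (hA y h.2) hne)
      · exact Or.inl (hQc (hB x h.1) (hB y h.2) hne)
  have hle : G ≤ bootStep H G := le_sup_left
  intro x hx y hy hne
  simp only [Finset.coe_union, Set.mem_union, Finset.mem_coe] at hx hy
  by_cases hxP : x ∈ P <;> by_cases hyP : y ∈ P
  · exact hle (hPc hxP hyP hne)
  · have hyQ := hy.resolve_left hyP
    by_cases hxQ : x ∈ Q
    · exact hle (hQc hxQ hyQ hne)
    · exact key x y hxP hxQ hyQ hyP
  · have hxQ := hx.resolve_left hxP
    by_cases hyQ : y ∈ Q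
    · exact hle (hQc hxQ hyQ hne)
    · exact (key y x hyP hyQ hxQ hxP).symm
  · exact hle (hQc (hx.resolve_left hxP) (hy.resolve_left hyP) hne)

/-! ### Chains of added edges and the linear bound -/

/-- The pair `uv` is added in step `t + 1` of the process. -/
def BornAt {V β : Type*} (H : SimpleGraph V) (G : SimpleGraph β) (t : ℕ) (u v : β) : Prop :=
  (bootProcess H G (t + 1)).Adj u v ∧ ¬ (bootProcess H G t).Adj u v

lemma BornAt.symm {V β : Type*} {H : SimpleGraph V} {G : SimpleGraph β} {t : ℕ} {u v : β}
    (h : BornAt H G t u v) : BornAt H G t v u :=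
  ⟨h.1.symm, fun h' => h.2 h'.symm⟩

/-- The copy of `H` completed by an edge added in step `t + 1`. -/
lemma BornAt.exists_copy {V β : Type*} [Finite β] {H : SimpleGraph V}
    {G : SimpleGraph β} {t : ℕ} {u v : β} (h : BornAt H G t u v) :
    ∃ φ, Creates H (bootProcess H G t) u v φ ∧ u ∈ Set.range φ ∧ v ∈ Set.range φ ∧
      ∀ x y, H.Adj x y → (bootProcess H G (t + 1)).Adj (φ x) (φ y) := by
  have h1 := h.1
  rw [bootProcess, bootStep_adj_s6] at h1
  obtain ⟨φ, hφ⟩ := h1.resolve_left h.2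
  refine ⟨φ, hφ, ?_, ?_, fun x y hxy => ?_⟩
  · obtain ⟨x, y, -, he⟩ := hφ.2.2
    rcases Sym2.eq_iff.mp he with ⟨h1, h2⟩ | ⟨h1, h2⟩
    · exact ⟨x, h1⟩
    · exact ⟨y, h2⟩
  · obtain ⟨x, y, -, he⟩ := hφ.2.2
    rcases Sym2.eq_iff.mp he with ⟨h1, h2⟩ | ⟨h1, h2⟩
    · exact ⟨y, h2⟩
    · exact ⟨x, h1⟩
  · rcases hφ.2.1 x y hxy with h2 | h2
    · exact bootProcess_mono H G (Nat.le_succ t) h2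
    · rcases Sym2.eq_iff.mp h2 with ⟨h3, h4⟩ | ⟨h3, h4⟩
      · rw [h3, h4]; exact h.1
      · rw [h3, h4]; exact h.1.symm

/-- A copy of `H` completed in step `t + 2` uses an edge added in step `t + 1`: otherwise it
would have been completed one step earlier. -/
lemma BornAt.exists_prev {V β : Type*} [Finite β] {H : SimpleGraph V} {G : SimpleGraph β}
    {t : ℕ} {u v : β} (h : BornAt H G (t + 1) u v) {φ : V → β}
    (hφ : Creates H (bootProcess H G (t + 1)) u v φ) :
    ∃ x y, BornAt H G t (φ x) (φ y) := by
  by_contra! hcon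
  refine h.2 ?_
  rw [bootProcess, bootStep_adj_s6]
  refine Or.inr ⟨φ, hφ.1, fun x y hxy => ?_, hφ.2.2⟩
  rcases hφ.2.1 x y hxy with h1 | h1
  · by_cases h2 : (bootProcess H G t).Adj (φ x) (φ y)
    · exact Or.inl h2
    · exact absurd ⟨h1, h2⟩ (hcon x y)
  · exact Or.inr h1

/-- The nested cliques obtained by tracing an edge added in step `t + 1` back to the start:
`U i` is the union of the first `i + 1` copies of `H` in the chain, it contains an edge added
in step `i + 1`, and it is a clique after step `i + c + 2`. -/
lemma exists_chain {V β : Type*} [Fintype V] [Finite β] [DecidableEq β] {H : SimpleGraph V}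
    {a b : V} {A B : Set V} (hs : Splits H a b A B) {c : ℕ} (hc : bootProcess H H c = ⊤)
    (G : SimpleGraph β) (t : ℕ) : ∀ u v, BornAt H G t u v →
    ∃ U : ℕ → Finset β, Monotone U ∧ u ∈ U t ∧ v ∈ U t ∧ ∀ i ≤ t,
      Fintype.card V ≤ (U i).card ∧ (bootProcess H G (i + c + 2)).IsClique (U i) ∧
      ∃ p ∈ U i, ∃ q ∈ U i, BornAt H G i p q := by
  classical
  have hcopy : ∀ t u v, BornAt H G t u v → ∃ φ : V → β,
      Creates H (bootProcess H G t) u v φ ∧ ∃ W : Finset β, (W : Set β) = Set.range φ ∧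
        Fintype.card V ≤ W.card ∧ u ∈ W ∧ v ∈ W ∧
        (bootProcess H G (t + 1 + c)).IsClique W := by
    intro t u v h
    obtain ⟨φ, hφ, hu, hv, hom⟩ := h.exists_copy
    have hW : ((Finset.univ.image φ : Finset β) : Set β) = Set.range φ := by simp
    refine ⟨φ, hφ, Finset.univ.image φ, hW, ?_, by simpa using hu, by simpa using hv, ?_⟩
    · rw [Finset.card_image_of_injective _ hφ.1, Finset.card_univ]
    · rw [hW]
      exact clique_of_copy hc hφ.1 hom
  have hclmono : ∀ {i j : ℕ} {W : Finset β}, i ≤ j → (bootProcess H G i).IsClique W →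
      (bootProcess H G j).IsClique W := fun hij h => h.mono (bootProcess_mono H G hij)
  induction t with
  | zero =>
    intro u v h
    obtain ⟨φ, -, W, -, hcard, hu, hv, hcl⟩ := hcopy 0 u v h
    refine ⟨fun _ => W, monotone_const, hu, hv, fun i hi => ?_⟩
    obtain rfl : i = 0 := by omega
    exact ⟨hcard, hclmono (by omega) hcl, u, hu, v, hv, h⟩
  | succ t ih =>
    intro u v h
    obtain ⟨φ, hφ, W, hW, hcard, hu, hv, hcl⟩ := hcopy (t + 1) u v h
    obtain ⟨x, y, hxy⟩ := h.exists_prev hφ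
    obtain ⟨U, hmono, hxU, hyU, hU⟩ := ih _ _ hxy
    have hxW : φ x ∈ W := by rw [← Finset.mem_coe, hW]; exact ⟨x, rfl⟩
    have hyW : φ y ∈ W := by rw [← Finset.mem_coe, hW]; exact ⟨y, rfl⟩
    have hint : 2 ≤ (U t ∩ W).card := by
      rw [← Finset.card_pair hxy.1.ne]
      apply Finset.card_le_card
      intro z hz
      simp only [Finset.mem_insert, Finset.mem_singleton] at hz
      rcases hz with rfl | rfl <;> simp [*]
    obtain ⟨hUc, hUcl, -⟩ := hU t le_rfl
    have hmerge := merge hs hUcl (hclmono (by omega) hcl) hUc hcard hint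
    refine ⟨fun i => if i ≤ t then U i else U t ∪ W, ?_, by simp [hu], by simp [hv], ?_⟩
    · intro i j hij
      by_cases hj : j ≤ t
      · simpa [hj, hij.trans hj] using hmono hij
      · by_cases hi : i ≤ t
        · simpa [hj, hi] using (hmono hi).trans Finset.subset_union_left
        · simp [hj, hi]
    · intro i hi
      by_cases hit : i ≤ t
      · simpa only [hit, if_true] using hU i hit
      · obtain rfl : i = t + 1 := by omega
        simp only [hit, if_false]
        refine ⟨hUc.trans (Finset.card_le_card Finset.subset_union_left), ?_,
          u, Finset.mem_union_right _ hu, v, Finset.mem_union_right _ hv, h⟩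
        have : t + 1 + c + 2 = t + c + 2 + 1 := by omega
        rw [this]
        exact hmerge

/-- Along a chain of nested cliques, the clique gains a vertex every `c + 2` steps. -/
lemma runningTime_le {V : Type*} [Fintype V] {H : SimpleGraph V}
    {a b : V} {A B : Set V} (hs : Splits H a b A B) {c : ℕ} (hc : bootProcess H H c = ⊤)
    {n : ℕ} (G : SimpleGraph (Fin n)) : runningTime H G ≤ (c + 2) * n := by
  rcases Nat.eq_zero_or_pos (runningTime H G) with h0 | hpos
  · omega
  obtain ⟨T, hT⟩ : ∃ T, runningTime H G = T + 1 := ⟨runningTime H G - 1, by omega⟩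
  have hne : bootProcess H G T ≠ bootProcess H G (T + 1) :=
    Nat.notMem_of_lt_sInf (s := {t | bootProcess H G t = bootProcess H G (t + 1)})
      (by change T < runningTime H G; omega)
  obtain ⟨u, v, huv⟩ : ∃ u v, BornAt H G T u v := by
    by_contra! hcon
    refine hne (le_antisymm (bootProcess_mono H G (Nat.le_succ T)) fun u v h => ?_)
    by_contra h'
    exact hcon u v ⟨h, h'⟩
  obtain ⟨U, hmono, -, -, hU⟩ := exists_chain hs hc G T u v huv
  -- `U i` is a clique after step `i + c + 2`, so the edge added in the next step leaves `U i`
  have hgrow : ∀ j, j * (c + 2) ≤ T → j + 1 ≤ (U (j * (c + 2))).card := by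
    intro j
    induction j with
    | zero =>
      intro h
      obtain ⟨-, -, p, hp, -⟩ := hU (0 * (c + 2)) h
      exact Finset.card_pos.mpr ⟨p, hp⟩
    | succ j ih =>
      intro h
      have hle : j * (c + 2) ≤ (j + 1) * (c + 2) := Nat.mul_le_mul_right _ (Nat.le_succ j)
      have h1 := ih (hle.trans h)
      have hss : U (j * (c + 2)) ⊂ U ((j + 1) * (c + 2)) := by
        refine (hmono hle).lt_of_ne fun heq => ?_
        obtain ⟨-, -, p, hp, q, hq, hpq⟩ := hU _ h
        obtain ⟨-, hcl, -⟩ := hU _ (hle.trans h)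
        rw [← heq] at hp hq
        have h2 := hcl hp hq hpq.1.ne
        have h3 : j * (c + 2) + c + 2 = (j + 1) * (c + 2) := by ring
        rw [h3] at h2
        exact hpq.2 h2
      have := Finset.card_lt_card hss
      omega
  have h1 := hgrow (T / (c + 2)) (Nat.div_mul_le_self _ _)
  have h2 := Finset.card_le_univ (U (T / (c + 2) * (c + 2)))
  rw [Fintype.card_fin] at h2
  have h3 : T < n * (c + 2) := (Nat.div_lt_iff_lt_mul (by omega)).mp (by omega)
  rw [hT, mul_comm]
  exact h3

/-- If `H` has an edge `e` with `κ(H − e) ≤ 2` and the `H`-bootstrap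
process on `H` itself ends in the complete graph, then `M_H(n) = O(n)`. -/
theorem maxRunningTime_linear_upper_of_connectivity {V : Type} [Fintype V]
    (H : SimpleGraph V) (e : Sym2 V) (he : e ∈ H.edgeSet)
    (hκ : VertexConnLE (H.deleteEdges {e}) 2)
    (hfinal : bootProcess H H (runningTime H H) = (⊤ : SimpleGraph V)) :
    ∃ C : ℝ, 0 < C ∧ ∀ n : ℕ, (maxRunningTime H n : ℝ) ≤ C * n := by
  obtain ⟨a, b, A, B, hs⟩ := exists_splits he hκ hfinal
  refine ⟨(runningTime H H + 2 : ℕ), by positivity, fun n => ?_⟩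
  have h : maxRunningTime H n ≤ (runningTime H H + 2) * n := by
    refine csSup_le' ?_
    rintro _ ⟨G, rfl⟩
    exact runningTime_le hs hfinal G
  exact_mod_cast h
end
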